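/- arXiv:math/0407054 — 4 statements merged into one kernel-verified Lean document; each statement's English description precedes it below -/
import Mathlib

section
/- Let H be an infinite-dimensional separable complex Hilbert space. Then the unitary group U(H) = {u ∈ B(H) : u*u = uu* = 1}, equipped with the topology induced by the operator norm, is a contractible topological space. (Kuiper's theorem; the case of the trivial group in Proposition A3.1.) -/
/-!
The identity map of `U(H)` is shown to be null-homotopic through maps into the invertible operators
(`null_val`); the continuous retraction `g ↦ g (g* g)^(-1/2)` of the invertible operators onto the
unitary ones then turns this into a contraction of `U(H)` (`contractible_of_null`).

The null-homotopy follows Kuiper. Assume first that there are isometries `A u`, `B u` of `H`,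
depending norm-continuously on `u ∈ U(H)`, such that the range of `B u` is orthogonal to the range of
`A u` and complementary to that of `u A u`. Rotating `u A u` to `B u` and `B u` to `A u`
multiplies `u` by a null-homotopic family and makes it fix the range of `A u`
(`exists_null_fix`). After removal of an off-diagonal block, `u` is of the form `1 ⊕ g` with an
infinite-dimensional first summand. As `H` is isomorphic to a countable sum of copies of itself,
`1 ⊕ g` can be contracted by an Eilenberg swindle (`null_of_fix`, `null_swindle`, assembled in
`null_of_data`); the infinite sum `g ⊕ g ⊕ ⋯` is a norm-continuous function of `g`
(`exists_swindle_data`).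

The isometries `A u`, `B u` are obtained by gluing (`exists_continuous_isometries`). Take a partition
of unity on `U(H)` subordinate to the balls of radius `1/2` and pass to the associated weights
indexed by finite sets `σ` of centres, such that the sets active at one point form a chain
(`exists_weights`, the barycentric subdivision of the nerve). By recursion on `σ`, isometries `A σ`
and `B σ` are chosen that have the required orthogonality properties with respect to all centres in
`σ` and to the choices made for the proper subsets of `σ` (`exists_families`). There is always room
for a further choice because only sparse isometries are used: they send the `i`-th basis vector to
a vector without components of index less than `i ^ 2` (`Thin`, `exists_orthogonal_unit`). Because
of the orthogonality, the weighted sums of the `A σ` and of the `B σ` are again isometries, and at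
`u` they have the required property with respect to some centre within distance `1/2` of `u`, which
is enough.
-/

set_option linter.unusedSectionVars false
set_option linter.unusedSimpArgs false

namespace Kuiper

/-! ### Null-homotopic families of units -/

section Null
variable {X R : Type*} [TopologicalSpace X] [NormedRing R] [NormedAlgebra ℂ R]

/-- `Null f`: the map `f : X → R` takes values in the units of `R` and is homotopic, through
continuous maps into the units, to the constant map `1`. The inverses `k` of the homotopy `h` are
carried along, and the time parameter runs over all of `ℝ`. -/
def Null (f : X → R) : Prop :=
  ∃ h k : ℝ → X → R, Continuous (fun p : ℝ × X => h p.1 p.2) ∧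
    Continuous (fun p : ℝ × X => k p.1 p.2) ∧
    (∀ t, h t * k t = 1) ∧ (∀ t, k t * h t = 1) ∧ h 0 = 1 ∧ h 1 = f

lemma Null.mul {f g : X → R} (hf : Null f) (hg : Null g) : Null (f * g) := by
  obtain ⟨h, k, ch, ck, h1, h2, h3, h4⟩ := hf
  obtain ⟨h', k', ch', ck', h1', h2', h3', h4'⟩ := hg
  refine ⟨fun t => h t * h' t, fun t => k' t * k t, ch.mul ch', ck'.mul ck, fun t => ?_,
    fun t => ?_, by simp [h3, h3'], by simp [h4, h4']⟩
  · rw [mul_assoc, ← mul_assoc (h' t), h1', one_mul, h1]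
  · rw [mul_assoc, ← mul_assoc (k t), h2, one_mul, h2']

lemma Null.exists_inv {f : X → R} (hf : Null f) : ∃ g, Null g ∧ f * g = 1 ∧ g * f = 1 := by
  obtain ⟨h, k, ch, ck, h1, h2, h3, rfl⟩ := hf
  refine ⟨k 1, ⟨k, h, ck, ch, h2, h1, ?_, rfl⟩, h1 1, h2 1⟩
  simpa [h3] using h1 0

lemma Null.continuous {f : X → R} (hf : Null f) : Continuous f := by
  obtain ⟨h, k, ch, ck, h1, h2, h3, rfl⟩ := hf
  exact ch.comp (Continuous.prodMk continuous_const continuous_id)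

lemma Null.inv {f g : X → R} (hf : Null f) (hfg : f * g = 1) : Null g := by
  obtain ⟨g', hg', h1, h2⟩ := hf.exists_inv
  have : g = g' := by
    calc g = (g' * f) * g := by rw [h2, one_mul]
      _ = g' := by rw [mul_assoc, hfg, mul_one]
  rwa [this]

lemma Null.conj {f a b : X → R} (hf : Null f) (ca : Continuous a) (cb : Continuous b)
    (hab : a * b = 1) (hba : b * a = 1) : Null (a * f * b) := by
  obtain ⟨h, k, ch, ck, h1, h2, h3, rfl⟩ := hf
  have ca' : Continuous fun p : ℝ × X => a p.2 := ca.comp continuous_snd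
  have cb' : Continuous fun p : ℝ × X => b p.2 := cb.comp continuous_snd
  refine ⟨fun t => a * h t * b, fun t => a * k t * b, (ca'.mul ch).mul cb',
    (ca'.mul ck).mul cb', fun t => ?_, fun t => ?_, by simp [h3, hab], rfl⟩
  · calc a * h t * b * (a * k t * b) = a * h t * (b * a) * k t * b := by simp only [mul_assoc]
      _ = a * (h t * k t) * b := by rw [hba]; simp only [mul_assoc, one_mul]
      _ = 1 := by rw [h1]; simp [hab]
  · calc a * k t * b * (a * h t * b) = a * k t * (b * a) * h t * b := by simp only [mul_assoc]
      _ = a * (k t * h t) * b := by rw [hba]; simp only [mul_assoc, one_mul]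
      _ = 1 := by rw [h2]; simp [hab]

/-- If `c = ρ b ρ⁻¹` with `ρ` null-homotopic and `b = a⁻¹`, then `a c` is the commutator of `a`
and `ρ`, so it is null-homotopic. -/
lemma Null.commutator {ρ a b c : X → R} (hρ : Null ρ) (ca : Continuous a) (cb : Continuous b)
    (hab : a * b = 1) (hba : b * a = 1) (hc : ρ * b = c * ρ) : Null (a * c) := by
  obtain ⟨σ, hσ, h1, h2⟩ := hρ.exists_inv
  have : a * c = a * ρ * b * σ := by
    rw [mul_assoc a, hc, mul_assoc, mul_assoc, h1, mul_one]
  rw [this]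
  exact (hρ.conj ca cb hab hba).mul hσ

/-- Unipotents are null-homotopic, by scaling. -/
lemma null_unipotent {n : X → R} (cn : Continuous n) (hn : n * n = 0) : Null (1 + n) := by
  refine ⟨fun t => 1 + (t : ℂ) • n, fun t => 1 - (t : ℂ) • n, ?_, ?_, fun t => ?_, fun t => ?_,
    by simp, by simp⟩
  · show Continuous fun p : ℝ × X => 1 + (p.1 : ℂ) • n p.2
    fun_prop
  · show Continuous fun p : ℝ × X => 1 - (p.1 : ℂ) • n p.2
    fun_prop
  · simp [mul_sub, add_mul, hn]
  · simp [mul_add, sub_mul, hn]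

/-- Rotation by a right angle: here `p` is an idempotent and `j` a complex structure on its
range, and the homotopy is `1 - p + cos θ p + sin θ j`, `0 ≤ θ ≤ π / 2`. -/
lemma null_rotation {p j : X → R} (cp : Continuous p) (cj : Continuous j)
    (hp : p * p = p) (hpj : p * j = j) (hjp : j * p = j) (hj : j * j = -p) :
    Null (1 - p + j) := by
  have key : ∀ c s : ℂ, c ^ 2 + s ^ 2 = 1 →
      (1 + (c - 1) • p + s • j) * (1 + (c - 1) • p - s • j) = 1 := by
    intro c s h
    have e : (1 + (c - 1) • p + s • j) * (1 + (c - 1) • p - s • j)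
        = 1 + (c ^ 2 + s ^ 2 - 1) • p := by
      simp only [mul_add, add_mul, mul_sub, smul_mul_assoc, mul_smul_comm, hp, hpj, hjp, hj,
        mul_one, one_mul]
      module
    rw [e, h]; simp
  let θ : ℝ → ℂ := fun t => (t * (Real.pi / 2) : ℝ)
  have cθ : Continuous θ := by fun_prop
  have h1 : θ 1 = Real.pi / 2 := by simp [θ]
  have h0 : θ 0 = 0 := by simp [θ]
  refine ⟨fun t => 1 + (Complex.cos (θ t) - 1) • p + Complex.sin (θ t) • j,
    fun t => 1 + (Complex.cos (θ t) - 1) • p - Complex.sin (θ t) • j, ?_, ?_, fun t => ?_,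
    fun t => ?_, ?_, ?_⟩
  · show Continuous fun q : ℝ × X => 1 + (Complex.cos (θ q.1) - 1) • p q.2
      + Complex.sin (θ q.1) • j q.2
    fun_prop
  · show Continuous fun q : ℝ × X => 1 + (Complex.cos (θ q.1) - 1) • p q.2
      - Complex.sin (θ q.1) • j q.2
    fun_prop
  · exact key _ _ (Complex.cos_sq_add_sin_sq _)
  · have := key (Complex.cos (θ t)) (-Complex.sin (θ t))
      (by rw [neg_sq]; exact Complex.cos_sq_add_sin_sq _)
    simpa [sub_eq_add_neg] using this
  · simp [h0]
  · simp only [h1, Complex.cos_pi_div_two, Complex.sin_pi_div_two]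
    module

/-- The right-angle rotation in the sum of the ranges of `P` and `Q`, taking `P` to `Q` and `Q` to
`-P`. The left inverses `L` of `P` and `M` of `Q` satisfy `L * Q = 0` and `M * P = 0`. -/
lemma null_swap {P Q L M : X → R} (cP : Continuous P) (cQ : Continuous Q) (cL : Continuous L)
    (cM : Continuous M) (h1 : L * P = 1) (h2 : M * Q = 1) (h3 : L * Q = 0) (h4 : M * P = 0) :
    Null (1 - (P * L + Q * M) + (Q * L - P * M)) := by
  have h1' : ∀ x, L * (P * x) = x := fun x => by rw [← mul_assoc, h1, one_mul]
  have h2' : ∀ x, M * (Q * x) = x := fun x => by rw [← mul_assoc, h2, one_mul]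
  have h3' : ∀ x, L * (Q * x) = 0 := fun x => by rw [← mul_assoc, h3, zero_mul]
  have h4' : ∀ x, M * (P * x) = 0 := fun x => by rw [← mul_assoc, h4, zero_mul]
  apply null_rotation ((cP.mul cL).add (cQ.mul cM)) ((cQ.mul cL).sub (cP.mul cM)) <;>
  · simp only [mul_add, add_mul, mul_sub, sub_mul, mul_assoc, h1', h2', h3', h4', mul_zero]
    abel

lemma swap_mul {P Q L M : X → R} (h1 : L * P = 1) (h4 : M * P = 0) :
    (1 - (P * L + Q * M) + (Q * L - P * M)) * P = Q := by
  simp [add_mul, sub_mul, mul_assoc, h1, h4]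

variable [StarRing R] [ContinuousStar R]

/-- A family `u` of units can be multiplied by a null-homotopic family so that the product fixes the
range of the isometry `A`, provided there is an isometry `B` with range orthogonal to that of `A`
and complementary to that of `u A`, in the sense that some left inverse `L` of `u A` kills `B`. -/
lemma exists_null_fix {u A B L : X → R} (cu : Continuous u) (cA : Continuous A)
    (cB : Continuous B) (cL : Continuous L) (hA : star A * A = 1) (hB : star B * B = 1)
    (hBA : star B * A = 0) (hL : L * (u * A) = 1) (hLB : L * B = 0) :
    ∃ w, Null w ∧ w * (u * A) = A := by
  set P := u * A with hP
  have cP : Continuous P := cu.mul cA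
  set E := star B * P with hE
  have cE : Continuous E := cB.star.mul cP
  set P' := P - B * E with hP'
  have cP' : Continuous P' := cP.sub (cB.mul cE)
  have hLB' : ∀ x, L * (B * x) = 0 := fun x => by rw [← mul_assoc, hLB, zero_mul]
  have hB' : ∀ x, star B * (B * x) = x := fun x => by rw [← mul_assoc, hB, one_mul]
  have hAB : star A * B = 0 := by simpa using congrArg star hBA
  have n1 : Null (1 + -(B * E * L)) := by
    refine null_unipotent ((cB.mul cE).mul cL).neg ?_
    simp [mul_assoc, hLB']
  have e1 : (1 + -(B * E * L)) * P = P' := by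
    simp only [add_mul, neg_mul, mul_assoc, hL, mul_one, one_mul, hP']; abel
  have l1 : L * P' = 1 := by simp [hP', mul_sub, hL, hLB']
  have l2 : star B * P' = 0 := by simp [hP', mul_sub, hB', hE]
  have n2 := null_swap (M := star B) cP' cB cL cB.star l1 hB hLB l2
  have e2 := swap_mul (Q := B) l1 l2
  have n3 := null_swap (L := star B) (M := star A) cB cA cB.star cA.star hB hA hBA hAB
  have e3 := swap_mul (Q := A) hB hAB
  refine ⟨_, (n3.mul n2).mul n1, ?_⟩
  rw [mul_assoc, e1, mul_assoc, e2, e3]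

/-- The unital embedding of `R` into itself along an isometry `A`: `x` is transported to the range
of `A` and extended by the identity on the orthogonal complement. -/
def Psi (A x : X → R) : X → R := A * x * star A + (1 - A * star A)

lemma Psi.continuous {A x : X → R} (cA : Continuous A) (cx : Continuous x) :
    Continuous (Psi A x) :=
  ((cA.mul cx).mul cA.star).add (continuous_const.sub (cA.mul cA.star))

lemma Psi_mul {A x y : X → R} (hA : star A * A = 1) : Psi A (x * y) = Psi A x * Psi A y := by
  have hA' : ∀ x, star A * (A * x) = x := fun x => by rw [← mul_assoc, hA, one_mul]
  simp only [Psi, mul_add, add_mul, mul_sub, sub_mul, mul_assoc, hA', one_mul, mul_one]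
  abel

lemma Psi_one (A : X → R) : Psi A 1 = 1 := by simp [Psi]

lemma Psi_Psi (A B x : X → R) : Psi A (Psi B x) = Psi (A * B) x := by
  simp only [Psi, mul_add, add_mul, mul_sub, sub_mul, mul_assoc, mul_one, star_mul]
  abel

lemma Null.psi {A x : X → R} (hx : Null x) (cA : Continuous A) (hA : star A * A = 1) :
    Null (Psi A x) := by
  obtain ⟨h, k, ch, ck, h1, h2, h3, rfl⟩ := hx
  have cA' : Continuous fun p : ℝ × X => A p.2 := cA.comp continuous_snd
  refine ⟨fun t => Psi A (h t), fun t => Psi A (k t), ?_, ?_, fun t => ?_, fun t => ?_, ?_, rfl⟩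
  · exact ((cA'.mul ch).mul cA'.star).add (continuous_const.sub (cA'.mul cA'.star))
  · exact ((cA'.mul ck).mul cA'.star).add (continuous_const.sub (cA'.mul cA'.star))
  · rw [← Psi_mul hA, h1, Psi_one]
  · rw [← Psi_mul hA, h2, Psi_one]
  · simp only [h3, Psi_one]

/-- The embeddings of `x` along two orthogonal isometries `P` and `Q` are homotopic, by rotating one
range into the other; `y` is the inverse of `x`. -/
lemma null_psi_psi {P Q x y : X → R} (cP : Continuous P) (cQ : Continuous Q) (cx : Continuous x)
    (cy : Continuous y) (hP : star P * P = 1) (hQ : star Q * Q = 1) (hPQ : star P * Q = 0)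
    (hxy : x * y = 1) (hyx : y * x = 1) : Null (Psi P x * Psi Q y) := by
  have hQP : star Q * P = 0 := by simpa using congrArg star hPQ
  refine (null_swap (L := star P) (M := star Q) cP cQ cP.star cQ.star hP hQ hPQ
    hQP).commutator (Psi.continuous cP cx) (Psi.continuous cP cy) (by rw [← Psi_mul hP, hxy, Psi_one])
    (by rw [← Psi_mul hP, hyx, Psi_one]) ?_
  have h1' : ∀ x, star P * (P * x) = x := fun x => by rw [← mul_assoc, hP, one_mul]
  have h2' : ∀ x, star Q * (Q * x) = x := fun x => by rw [← mul_assoc, hQ, one_mul]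
  have h3' : ∀ x, star P * (Q * x) = 0 := fun x => by rw [← mul_assoc, hPQ, zero_mul]
  have h4' : ∀ x, star Q * (P * x) = 0 := fun x => by rw [← mul_assoc, hQP, zero_mul]
  simp only [Psi, mul_add, add_mul, mul_sub, sub_mul, mul_assoc, h1', h2', h3', h4', mul_zero,
    mul_one, one_mul]
  abel

/-- The Eilenberg swindle: `D` plays the role of the infinite block sum `g ⊕ g ⊕ ⋯`, so that
`D = g ⊕ D` with respect to the ranges of `V` and `W`, that is, `Psi V g = D * Psi W D⁻¹`. After
embedding along `V` the two factors become `Psi V D` and the inverse of `Psi (V * W) D`, both of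
which can be rotated to the range of `W`, where they cancel. -/
lemma null_swindle {V W g D D' : X → R} (cV : Continuous V) (cW : Continuous W)
    (cD : Continuous D) (cD' : Continuous D')
    (hV : star V * V = 1) (hW : star W * W = 1) (hVW : star V * W = 0)
    (hsum : V * star V + W * star W = 1) (hDD : D * D' = 1) (hDD' : D' * D = 1)
    (hD : D = V * g * star V + W * D * star W) : Null (Psi (V * V) g) := by
  have hWV : star W * V = 0 := by simpa using congrArg star hVW
  have h1' : ∀ x, star V * (V * x) = x := fun x => by rw [← mul_assoc, hV, one_mul]
  have h2' : ∀ x, star W * (W * x) = x := fun x => by rw [← mul_assoc, hW, one_mul]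
  have h3' : ∀ x, star V * (W * x) = 0 := fun x => by rw [← mul_assoc, hVW, zero_mul]
  have h4' : ∀ x, star W * (V * x) = 0 := fun x => by rw [← mul_assoc, hWV, zero_mul]
  have hDD'' : ∀ x, D * (D' * x) = x := fun x => by rw [← mul_assoc, hDD, one_mul]
  have e : Psi V g = D * Psi W D' := by
    have e1 : Psi W D' = W * D' * star W + V * star V := by
      rw [Psi, ← hsum]; abel
    have e2 : Psi V g = V * g * star V + W * star W := by
      rw [Psi, ← hsum]; abel
    rw [e1, e2, hD]
    simp only [mul_add, add_mul, mul_assoc, h1', h2', h3', h4', mul_zero, hDD'']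
    abel
  have n1 : Null (Psi V D * Psi W D') := null_psi_psi cV cW cD cD' hV hW hVW hDD hDD'
  have n2 : Null (Psi W D * Psi (V * W) D') :=
    null_psi_psi cW (cV.mul cW) cD cD' hW (by simp [mul_assoc, h1', hW]) (h4' W) hDD hDD'
  have : Psi (V * V) g = (Psi V D * Psi W D') * (Psi W D * Psi (V * W) D') := by
    rw [mul_assoc, ← mul_assoc (Psi W D'), ← Psi_mul hW, hDD', Psi_one, one_mul, ← Psi_Psi V W,
      ← Psi_mul hV, ← e, Psi_Psi]
  rw [this]
  exact n1.mul n2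

/-- Let `g` be a family of units that is block diagonal with respect to the range of an isometry
`A` and its orthogonal complement, and equal to `1` on the range of `A`. If the embedding along some
isometry `V` makes the inverse `k` of `g` null-homotopic, then `g` is null-homotopic: the
complement of the range of `A` can be rotated into the range of `A V`. -/
lemma null_of_fix {g k A V : X → R} (cg : Continuous g) (ck : Continuous k) (cA : Continuous A)
    (cV : Continuous V) (hgk : g * k = 1) (hkg : k * g = 1) (hA : star A * A = 1)
    (hV : star V * V = 1) (hgA : g * A = A) (hAg : star A * g = star A)
    (hn : Null (Psi V k)) : Null g := by
  have hkA : k * A = A := by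
    calc k * A = k * (g * A) := by rw [hgA]
      _ = A := by rw [← mul_assoc, hkg, one_mul]
  have hAk : star A * k = star A := by
    calc star A * k = (star A * g) * k := by rw [hAg]
      _ = star A := by rw [mul_assoc, hgk, mul_one]
  have n1 : Null (Psi (A * V) k) := by
    rw [← Psi_Psi]; exact hn.psi cA hA
  set Q := A * V with hQdef
  have cQ : Continuous Q := cA.mul cV
  have hA' : ∀ x, star A * (A * x) = x := fun x => by rw [← mul_assoc, hA, one_mul]
  have hQ : star Q * Q = 1 := by simp [hQdef, mul_assoc, hA', hV]
  set q := 1 - A * star A with hq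
  have cq : Continuous q := continuous_const.sub (cA.mul cA.star)
  have hqA : q * A = 0 := by simp [hq, sub_mul, mul_assoc, hA]
  have hqq : q * q = q := by
    nth_rw 2 [hq]; rw [mul_sub, ← mul_assoc, hqA]; simp
  have hqs : star q = q := by simp [hq]
  have hqQ : q * Q = 0 := by rw [hQdef, ← mul_assoc, hqA, zero_mul]
  have hQq : star Q * q = 0 := by simpa [hqs] using congrArg star hqQ
  have a1 : ∀ x, q * (q * x) = q * x := fun x => by rw [← mul_assoc, hqq]
  have a2 : ∀ x, q * (Q * x) = 0 := fun x => by rw [← mul_assoc, hqQ, zero_mul]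
  have a3 : ∀ x, star Q * (q * x) = 0 := fun x => by rw [← mul_assoc, hQq, zero_mul]
  have a4 : ∀ x, star Q * (Q * x) = x := fun x => by rw [← mul_assoc, hQ, one_mul]
  have hρ : Null (1 - (q + Q * q * star Q) + (Q * q - q * star Q)) := by
    apply null_rotation (p := q + Q * q * star Q) (j := Q * q - q * star Q)
      (cq.add ((cQ.mul cq).mul cQ.star)) ((cQ.mul cq).sub (cq.mul cQ.star)) <;>
    · simp only [mul_add, add_mul, mul_sub, sub_mul, mul_assoc, a1, a2, a3, a4, hqq, hQq, hqQ,
        mul_zero]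
      abel
  have n2 : Null (g * Psi Q k) := by
    refine hρ.commutator cg ck hgk hkg ?_
    -- `k` is `1 + n` with `n` living in the corner cut out by `q`
    obtain ⟨n, hn⟩ : ∃ n, n = k - 1 := ⟨_, rfl⟩
    have hk : k = 1 + n := by rw [hn]; abel
    have b1 : q * n = n := by
      simp only [hq, hn, sub_mul, mul_sub, mul_assoc, hAk]; simp
    have b2 : n * q = n := by
      simp only [hq, hn, sub_mul, mul_sub, ← mul_assoc, hkA]; simp
    have b3 : star Q * n = 0 := by rw [← b1, a3]
    have b4 : n * Q = 0 := by rw [← b2, mul_assoc, hqQ, mul_zero]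
    have b5 : ∀ x, n * (q * x) = n * x := fun x => by rw [← mul_assoc, b2]
    have b6 : ∀ x, n * (Q * x) = 0 := fun x => by rw [← mul_assoc, b4, zero_mul]
    have b7 : ∀ x, star Q * (n * x) = 0 := fun x => by rw [← mul_assoc, b3, zero_mul]
    rw [Psi, hk]
    simp only [mul_add, add_mul, mul_sub, sub_mul, mul_assoc, a1, a2, a3, a4, hqq, hQq, hqQ,
        mul_zero, b1, b2, b3, b4, b5, b6, b7, mul_one, one_mul]
    abel
  have : g = g * Psi Q k * Psi Q g := by
    rw [mul_assoc, ← Psi_mul hQ, hkg, Psi_one, mul_one]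
  rw [this]
  exact n2.mul (n1.inv (by rw [← Psi_mul hQ, hkg, Psi_one]))

/-- Kuiper's reduction. Given isometries `A`, `B` moving continuously with the parameter as in
`exists_null_fix`, and an infinite-sum operation `δ`, the family of units `u` is null-homotopic. -/
lemma null_of_data {u v A B L : X → R} (cu : Continuous u) (cv : Continuous v)
    (huv : u * v = 1) (hvu : v * u = 1)
    (cA : Continuous A) (cB : Continuous B) (cL : Continuous L) (hA : star A * A = 1)
    (hB : star B * B = 1) (hBA : star B * A = 0) (hL : L * (u * A) = 1) (hLB : L * B = 0)
    (V W : R) (hV : star V * V = 1) (hW : star W * W = 1) (hVW : star V * W = 0)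
    (hsum : V * star V + W * star W = 1) (δ : R → R) (cδ : Continuous δ) (δ1 : δ 1 = 1)
    (δm : ∀ x y, δ (x * y) = δ x * δ y) (hδ : ∀ x, δ x = V * x * star V + W * δ x * star W) :
    Null u := by
  obtain ⟨w, hw, hwA⟩ := exists_null_fix cu cA cB cL hA hB hBA hL hLB
  obtain ⟨w', hw', hww', hw'w⟩ := hw.exists_inv
  have hA' : ∀ x, star A * (A * x) = x := fun x => by rw [← mul_assoc, hA, one_mul]
  -- `g = w u` fixes the range of `A`, so it is block triangular
  obtain ⟨g, hg⟩ : ∃ g, g = w * u := ⟨_, rfl⟩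
  obtain ⟨k, hk⟩ : ∃ k, k = v * w' := ⟨_, rfl⟩
  have cg : Continuous g := hg ▸ hw.continuous.mul cu
  have ck : Continuous k := hk ▸ cv.mul hw'.continuous
  have hgk : g * k = 1 := by
    rw [hg, hk, mul_assoc, ← mul_assoc u, huv, one_mul, hww']
  have hkg : k * g = 1 := by
    rw [hg, hk, mul_assoc, ← mul_assoc w', hw'w, one_mul, hvu]
  have hgA : g * A = A := by rw [hg, mul_assoc, hwA]
  have hkA : k * A = A := by
    calc k * A = k * (g * A) := by rw [hgA]
      _ = A := by rw [← mul_assoc, hkg, one_mul]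
  have hgA' : ∀ x, g * (A * x) = A * x := fun x => by rw [← mul_assoc, hgA]
  have hkA' : ∀ x, k * (A * x) = A * x := fun x => by rw [← mul_assoc, hkA]
  -- the off-diagonal block is removed by the unipotent `1 + m`
  obtain ⟨m, hm⟩ : ∃ m, m = A * star A * (k - 1) := ⟨_, rfl⟩
  have cm : Continuous m := hm ▸ (cA.mul cA.star).mul (ck.sub continuous_const)
  have hmA : ∀ x, m * (A * x) = 0 := fun x => by
    simp [hm, mul_sub, sub_mul, mul_assoc, hkA']
  have hmm : m * m = 0 := by
    conv_lhs => rw [hm]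
    rw [← hm]; nth_rw 2 [hm]; rw [mul_assoc A, hmA]
  have n1 : Null (1 + m) := null_unipotent cm hmm
  have n1' : Null (1 - m) := by
    rw [sub_eq_add_neg]; exact null_unipotent cm.neg (by simp [hmm])
  have hm1 : (1 + m) * (1 - m) = 1 := by simp [mul_sub, add_mul, hmm]
  have hm2 : (1 - m) * (1 + m) = 1 := by simp [mul_add, sub_mul, hmm]
  have n2 : Null ((1 + m) * g) := by
    refine null_of_fix (k := k * (1 - m)) (A := A) (V := fun _ => V * V)
      (n1.continuous.mul cg) (ck.mul n1'.continuous) cA continuous_const ?_ ?_ hA ?_ ?_ ?_ ?_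
    · rw [mul_assoc, ← mul_assoc g, hgk, one_mul, hm1]
    · rw [mul_assoc, ← mul_assoc (1 - m), hm2, one_mul, hkg]
    · funext x
      show star (V * V) * (V * V) = 1
      rw [star_mul, mul_assoc, ← mul_assoc (star V) V, hV, one_mul, hV]
    · rw [mul_assoc, hgA, add_mul, one_mul]
      simpa using hmA 1
    · simp [hm, add_mul, sub_mul, mul_add, mul_sub, mul_assoc, hA', hkg]
    · obtain ⟨k', hk'⟩ : ∃ k', k' = k * (1 - m) := ⟨_, rfl⟩
      obtain ⟨g', hg'⟩ : ∃ g', g' = (1 + m) * g := ⟨_, rfl⟩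
      have ck' : Continuous k' := hk' ▸ ck.mul n1'.continuous
      have cg' : Continuous g' := hg' ▸ n1.continuous.mul cg
      have e1 : g' * k' = 1 := by rw [hg', hk', mul_assoc, ← mul_assoc g, hgk, one_mul, hm1]
      have e2 : k' * g' = 1 := by
        rw [hg', hk', mul_assoc, ← mul_assoc (1 - m), hm2, one_mul, hkg]
      rw [← hk']
      refine null_swindle (V := fun _ => V) (W := fun _ => W) (D := fun x => δ (k' x))
        (D' := fun x => δ (g' x)) continuous_const continuous_const (cδ.comp ck') (cδ.comp cg')
        ?_ ?_ ?_ ?_ ?_ ?_ ?_ <;> funext x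
      · exact hV
      · exact hW
      · exact hVW
      · exact hsum
      · show δ (k' x) * δ (g' x) = 1
        rw [← δm, show k' x * g' x = 1 from congrFun e2 x, δ1]
      · show δ (g' x) * δ (k' x) = 1
        rw [← δm, show g' x * k' x = 1 from congrFun e1 x, δ1]
      · exact hδ _
  have : u = w' * ((1 - m) * ((1 + m) * g)) := by
    rw [← mul_assoc (1 - m), hm2, one_mul, hg, ← mul_assoc, hw'w, one_mul]
  rw [this]
  exact hw'.mul (n1'.mul n2)

end Null

/-! ### Retraction of the invertible elements onto the unitary group -/

section Polar
variable {R : Type*} [CStarAlgebra R]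

/-- The inverse of the absolute value, `(g* g)^(-1/2)`. -/
noncomputable def absInv (g : R) : R := cfc (fun x : ℝ => (√x)⁻¹) (star g * g)

lemma spectrum_pos {g : R} (hg : IsUnit g) : ∀ x ∈ spectrum ℝ (star g * g), 0 < x := by
  intro x hx
  refine lt_of_le_of_ne (spectrum_star_mul_self_nonneg x hx) ?_
  rintro rfl
  exact (spectrum.zero_notMem ℝ (hg.star.mul hg)) hx

lemma contOn_inv_sqrt : ContinuousOn (fun x : ℝ => (√x)⁻¹) (Set.Ioi 0) := by
  refine ContinuousOn.inv₀ Real.continuous_sqrt.continuousOn ?_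
  intro x hx
  exact (Real.sqrt_pos.2 hx).ne'

lemma polar_mem {g : R} (hg : IsUnit g) : g * absInv g ∈ unitary R := by
  have hpos := spectrum_pos hg
  have hc : ContinuousOn (fun x : ℝ => (√x)⁻¹) (spectrum ℝ (star g * g)) :=
    contOn_inv_sqrt.mono hpos
  have hsa : IsSelfAdjoint (star g * g) := IsSelfAdjoint.star_mul_self g
  have hs : star (absInv g) = absInv g :=
    (cfc_predicate (fun x : ℝ => (√x)⁻¹) (star g * g) : IsSelfAdjoint _)
  have h1 : absInv g * (star g * g) * absInv g = 1 := by
    conv_lhs => rw [absInv]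
    nth_rw 2 [← cfc_id' ℝ (star g * g)]
    rw [← cfc_mul _ _ _ hc (by fun_prop), 
      ← cfc_mul (fun x : ℝ => (√x)⁻¹ * x) (fun x : ℝ => (√x)⁻¹) _ (hc.mul (by fun_prop)) hc]
    rw [← cfc_one ℝ (star g * g)]
    refine cfc_congr fun x hx => ?_
    have := hpos x hx
    have h2 : √x * √x = x := Real.mul_self_sqrt this.le
    have h3 : √x ≠ 0 := (Real.sqrt_pos.2 this).ne'
    show (√x)⁻¹ * x * (√x)⁻¹ = 1
    field_simp
    rw [sq, h2]
  have hu : IsUnit (absInv g) := by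
    unfold absInv
    rw [isUnit_cfc_iff _ _ hc hsa]
    intro x hx
    exact inv_ne_zero (Real.sqrt_pos.2 (hpos x hx)).ne'
  have h2 : star (g * absInv g) * (g * absInv g) = 1 := by
    rw [star_mul, hs, ← h1]; simp only [mul_assoc]
  have h3 : (g * absInv g) * star (g * absInv g) = 1 := by
    obtain ⟨w, hw⟩ := hg.mul hu
    rw [← hw] at h2 ⊢
    have : star (w : R) = ↑w⁻¹ := by
      rw [← mul_one (star (w : R)), ← w.mul_inv, ← mul_assoc, h2, one_mul]
    rw [this, w.mul_inv]
  exact ⟨h2, h3⟩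

lemma polar_unitary {g : R} (hg : g ∈ unitary R) : g * absInv g = g := by
  rw [absInv, Unitary.star_mul_self_of_mem hg, cfc_apply_one]
  simp

lemma continuous_polar {Y : Type*} [TopologicalSpace Y] {f : Y → R} (cf : Continuous f)
    (hf : ∀ y, IsUnit (f y)) : Continuous fun y => f y * absInv (f y) := by
  refine cf.mul ?_
  unfold absInv
  refine Continuous.cfc_of_mem_nhdsSet (s := Set.Ioi 0) _ ?_ (cf.star.mul cf)
    (fun y => IsSelfAdjoint.star_mul_self _) contOn_inv_sqrt
  refine (isOpen_Ioi.mem_nhdsSet).2 ?_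
  intro x hx
  obtain ⟨y, hy⟩ := Set.mem_iUnion.1 hx
  exact spectrum_pos (hf y) x hy

/-- Polar decomposition pushes a null-homotopy in the invertible elements into the unitary group. -/
lemma contractible_of_null (h : Null (Subtype.val : unitary R → R)) :
    ContractibleSpace (unitary R) := by
  obtain ⟨h, k, ch, ck, h1, h2, h3, h4⟩ := h
  have hu : ∀ p : ℝ × unitary R, IsUnit (h p.1 p.2) := fun p =>
    ⟨⟨h p.1 p.2, k p.1 p.2, congrFun (h1 p.1) p.2, congrFun (h2 p.1) p.2⟩, rfl⟩
  have cF := continuous_polar ch hu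
  rw [contractible_iff_id_nullhomotopic]
  refine ⟨1, ContinuousMap.Homotopic.symm ⟨⟨⟨fun p => ⟨_, polar_mem (hu ((p.1 : ℝ), p.2))⟩, ?_⟩,
    ?_, ?_⟩⟩⟩
  · refine Continuous.subtype_mk (cF.comp (?_ : Continuous fun p : unitInterval × unitary R =>
      ((p.1 : ℝ), p.2))) _
    fun_prop
  · intro x
    apply Subtype.ext
    have e : h 0 x = 1 := congrFun h3 x
    simpa [e] using polar_unitary (one_mem (unitary R))
  · intro x
    apply Subtype.ext
    have e : h 1 x = x := congrFun h4 x
    simpa [e] using polar_unitary x.2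

end Polar


/-! ### Isometries adapted to an orthonormal basis -/

section Basis
variable {H : Type*} [NormedAddCommGroup H] [InnerProductSpace ℂ H] [CompleteSpace H]

open scoped InnerProductSpace

lemma exists_basis [TopologicalSpace.SeparableSpace H] (hinf : ¬ FiniteDimensional ℂ H) :
    Nonempty (HilbertBasis ℕ ℂ H) := by
  obtain ⟨w, b, hb⟩ := exists_hilbertBasis ℂ H
  have hc : Countable w := by
    refine Pairwise.countable_of_isOpen_disjoint (s := fun i : w => Metric.ball (b i) (1 / 2))
      ?_ (fun i => Metric.isOpen_ball) (fun i => ⟨b i, by simp⟩)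
    intro i j hij
    refine Metric.ball_disjoint_ball ?_
    have h1 : ‖b i - b j‖ ^ 2 = 2 := by
      have h := norm_sub_sq (𝕜 := ℂ) (b i) (b j)
      rw [b.orthonormal.1, b.orthonormal.1, b.orthonormal.2 hij] at h
      rw [h]; norm_num
    rw [dist_eq_norm]
    nlinarith [norm_nonneg (b i - b j)]
  have hi : Infinite w := by
    by_contra h
    rw [not_infinite_iff_finite] at h
    have := Fintype.ofFinite w
    exact hinf b.toOrthonormalBasis.toBasis.finiteDimensional_of_finite
  obtain ⟨f⟩ := nonempty_equiv_of_countable (α := ℕ) (β := w)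
  refine ⟨HilbertBasis.mk (v := b ∘ f) (b.orthonormal.comp _ f.injective) ?_⟩
  rw [f.surjective.range_comp, b.dense_span]

lemma exists_isometry (e : HilbertBasis ℕ ℂ H) {c : ℕ → H} (hc : Orthonormal ℂ c) :
    ∃ T : H →ₗᵢ[ℂ] H, ∀ i, T (e i) = c i := by
  refine ⟨hc.orthogonalFamily.linearIsometry.comp e.repr.toLinearIsometry, fun i => ?_⟩
  change hc.orthogonalFamily.linearIsometry (e.repr (e i)) = c i
  rw [e.repr_self]
  exact (hc.orthogonalFamily.linearIsometry_apply_single (1 : ℂ)).trans (by simp)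

lemma star_mul_self_of_isometry (T : H →ₗᵢ[ℂ] H) :
    star T.toContinuousLinearMap * T.toContinuousLinearMap = 1 :=
  (ContinuousLinearMap.norm_map_iff_adjoint_comp_self _).1 T.norm_map

lemma ext_basis (e : HilbertBasis ℕ ℂ H) {S T : H →L[ℂ] H} (h : ∀ i, S (e i) = T (e i)) :
    S = T := by
  refine ContinuousLinearMap.ext_on ((Submodule.dense_iff_topologicalClosure_eq_top).2
    e.dense_span) ?_
  rintro _ ⟨i, rfl⟩
  exact h i

lemma ext_inner_basis (e : HilbertBasis ℕ ℂ H) {S T : H →L[ℂ] H}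
    (h : ∀ i j, ⟪e i, S (e j)⟫_ℂ = ⟪e i, T (e j)⟫_ℂ) : S = T := by
  refine ext_basis e fun j => ?_
  apply e.repr.injective
  ext i
  rw [e.repr_apply_apply, e.repr_apply_apply, h]

end Basis

/-! ### The infinite amplification of an operator -/

section Ampl
variable {H : Type*} [NormedAddCommGroup H] [InnerProductSpace ℂ H] [CompleteSpace H]

open scoped InnerProductSpace

lemma sum_le_ampl (x : H →L[ℂ] H) (f : lp (fun _ : ℕ => H) 2) (s : Finset ℕ) :
    ∑ n ∈ s, ‖x (f n)‖ ^ (2 : ENNReal).toReal ≤ (‖x‖ * ‖f‖) ^ (2 : ENNReal).toReal := by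
  have h := lp.sum_rpow_le_norm_rpow (p := 2) (by norm_num) f s
  rw [Real.mul_rpow (norm_nonneg _) (norm_nonneg _)]
  refine le_trans ?_ (mul_le_mul_of_nonneg_left h (by positivity))
  rw [Finset.mul_sum]
  refine Finset.sum_le_sum fun i _ => ?_
  rw [← Real.mul_rpow (norm_nonneg _) (norm_nonneg _)]
  exact Real.rpow_le_rpow (norm_nonneg _) (x.le_opNorm _) (by norm_num)

/-- The operator `x ⊕ x ⊕ ⋯` on the Hilbert sum of countably many copies of `H`. -/
noncomputable def ampl (x : H →L[ℂ] H) :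
    lp (fun _ : ℕ => H) 2 →L[ℂ] lp (fun _ : ℕ => H) 2 :=
  LinearMap.mkContinuous
    { toFun := fun f => ⟨fun n => x (f n), memℓp_gen' (sum_le_ampl x f)⟩
      map_add' := fun f g => by ext n; exact map_add x _ _
      map_smul' := fun a f => by ext n; exact map_smul x _ _ }
    ‖x‖ (fun f => lp.norm_le_of_forall_sum_le (by norm_num) (by positivity) (sum_le_ampl x f))

lemma ampl_apply (x : H →L[ℂ] H) (f : lp (fun _ : ℕ => H) 2) (n : ℕ) :
    ampl x f n = x (f n) := rfl

lemma norm_ampl_le (x : H →L[ℂ] H) : ‖ampl x‖ ≤ ‖x‖ :=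
  LinearMap.mkContinuous_norm_le _ (norm_nonneg _) _

/-- The Hilbert space `H` is the orthogonal sum of the ranges of the isometries `V, W V, W² V, …`;
the endomorphism `δ` of `B(H)` acts as `x` on each of these copies of `H`. -/
lemma exists_swindle_data (e : HilbertBasis ℕ ℂ H) :
    ∃ (V W : H →L[ℂ] H) (δ : (H →L[ℂ] H) → (H →L[ℂ] H)),
      star V * V = 1 ∧ star W * W = 1 ∧ star V * W = 0 ∧ V * star V + W * star W = 1 ∧
      Continuous δ ∧ δ 1 = 1 ∧ (∀ x y, δ (x * y) = δ x * δ y) ∧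
      ∀ x, δ x = V * x * star V + W * δ x * star W := by
  have hS : ∀ n, ∃ T : H →ₗᵢ[ℂ] H, ∀ i, T (e i) = e (Nat.pair n i) := fun n =>
    exists_isometry e (e.orthonormal.comp (fun i => Nat.pair n i) fun i j h => by
      simpa using h)
  choose S hSe using hS
  obtain ⟨W, hWe⟩ : ∃ T : H →ₗᵢ[ℂ] H, ∀ m,
      T (e m) = e (Nat.pair ((Nat.unpair m).1 + 1) (Nat.unpair m).2) :=
    exists_isometry e (e.orthonormal.comp
      (fun m => Nat.pair ((Nat.unpair m).1 + 1) (Nat.unpair m).2) fun i j h => by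
        have h' := Nat.pair_eq_pair.1 h
        rw [← Nat.pair_unpair i, ← Nat.pair_unpair j, h'.2, Nat.succ_injective h'.1])
  have hWS : ∀ n (x : H), W (S n x) = S (n + 1) x := by
    intro n x
    have : W.toContinuousLinearMap * (S n).toContinuousLinearMap =
        (S (n + 1)).toContinuousLinearMap := ext_basis e fun i => by simp [hSe, hWe]
    exact DFunLike.congr_fun this x
  have hV1 := star_mul_self_of_isometry (S 0)
  have hW1 := star_mul_self_of_isometry W
  have hVW : star (S 0).toContinuousLinearMap * W.toContinuousLinearMap = 0 := by
    refine ext_inner_basis e fun i j => ?_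
    rw [mul_apply_eq_comp, ContinuousLinearMap.star_eq_adjoint,
      ContinuousLinearMap.adjoint_inner_right]
    simp [hSe, hWe, orthonormal_iff_ite.1 e.orthonormal]
  have hsum : (S 0).toContinuousLinearMap * star (S 0).toContinuousLinearMap +
      W.toContinuousLinearMap * star W.toContinuousLinearMap = 1 := by
    have hWV : star W.toContinuousLinearMap * (S 0).toContinuousLinearMap = 0 := by
      simpa using congrArg star hVW
    refine ext_basis e fun m => ?_
    have key : ∀ n i, m = Nat.pair n i → ((S 0).toContinuousLinearMap *
        star (S 0).toContinuousLinearMap + W.toContinuousLinearMap *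
        star W.toContinuousLinearMap) (e m) = e m := by
      intro n i hm
      rcases n with _ | n
      · have : e m = (S 0).toContinuousLinearMap (e i) := by simp [hSe, hm]
        rw [this, ← mul_apply_eq_comp, add_mul, mul_assoc, hV1, mul_assoc, hWV]
        simp
      · have : e m = W.toContinuousLinearMap (e (Nat.pair n i)) := by simp [hWe, hm]
        rw [this, ← mul_apply_eq_comp, add_mul, mul_assoc, hVW, mul_assoc, hW1]
        simp
    exact key _ _ (Nat.pair_unpair m).symm
  have hsummand : IsHilbertSum ℂ (fun _ : ℕ => H) S := by
    refine IsHilbertSum.mk ?_ ?_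
    · intro m n hmn x y
      have : star (S m).toContinuousLinearMap * (S n).toContinuousLinearMap = 0 := by
        refine ext_inner_basis e fun i j => ?_
        rw [mul_apply_eq_comp, ContinuousLinearMap.star_eq_adjoint,
          ContinuousLinearMap.adjoint_inner_right]
        simp [hSe, orthonormal_iff_ite.1 e.orthonormal, hmn]
      have h2 := ContinuousLinearMap.adjoint_inner_right (S m).toContinuousLinearMap x
        ((S n).toContinuousLinearMap y)
      rw [← ContinuousLinearMap.star_eq_adjoint, ← mul_apply_eq_comp, this] at h2
      simpa using h2.symm
    · rw [← e.dense_span]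
      refine Submodule.topologicalClosure_mono (Submodule.span_le.2 ?_)
      rintro _ ⟨m, rfl⟩
      refine Submodule.mem_iSup_of_mem (Nat.unpair m).1 ⟨e (Nat.unpair m).2, ?_⟩
      simp [hSe]
  set J := hsummand.linearIsometryEquiv with hJ
  let JL : H →L[ℂ] lp (fun _ : ℕ => H) 2 := J.toContinuousLinearEquiv
  let JR : lp (fun _ : ℕ => H) 2 →L[ℂ] H := J.symm.toContinuousLinearEquiv
  let δ : (H →L[ℂ] H) → (H →L[ℂ] H) := fun x => JR ∘L ampl x ∘L JL
  have hδ : ∀ x y, δ x y = J.symm (ampl x (J y)) := fun x y => rfl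
  have hδS : ∀ x n y, δ x (S n y) = S n (x y) := by
    intro x n y
    have h1 : ∀ z, J.symm (lp.single 2 n z) = S n z := fun z =>
      hsummand.linearIsometryEquiv_symm_apply_single z
    rw [← h1, ← h1, hδ, J.apply_symm_apply]
    congr 1
    ext m
    rw [ampl_apply]
    by_cases hm : m = n
    · subst hm; simp
    · simp [lp.single_apply, Pi.single_eq_of_ne hm]
  have hext : ∀ {a b : H →L[ℂ] H}, (∀ n y, a (S n y) = b (S n y)) → a = b := by
    intro a b hab
    refine ext_basis e fun m => ?_
    have := hab (Nat.unpair m).1 (e (Nat.unpair m).2)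
    simpa [hSe] using this
  refine ⟨(S 0).toContinuousLinearMap, W.toContinuousLinearMap, δ, hV1, hW1, hVW, hsum, ?_, ?_,
    ?_, ?_⟩
  · have hadd : ∀ x y, δ (x - y) = δ x - δ y := fun x y => hext fun n z => by simp [hδS]
    have hb : ∀ x, ‖δ x‖ ≤ ‖x‖ := by
      intro x
      refine ContinuousLinearMap.opNorm_le_bound _ (norm_nonneg _) fun y => ?_
      rw [hδ, J.symm.norm_map, ← J.norm_map y]
      exact ((ampl x).le_opNorm _).trans
        (mul_le_mul_of_nonneg_right (norm_ampl_le x) (norm_nonneg _))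
    refine (LipschitzWith.of_dist_le_mul (K := 1) fun x y => ?_).continuous
    rw [dist_eq_norm, dist_eq_norm, ← hadd]
    simpa using hb (x - y)
  · exact hext fun n y => by simp [hδS]
  · intro x y
    exact hext fun n z => by simp [hδS]
  · intro x
    have h1 : δ x * (S 0).toContinuousLinearMap = (S 0).toContinuousLinearMap * x := by
      ext y; simp [hδS]
    have h2 : δ x * W.toContinuousLinearMap = W.toContinuousLinearMap * δ x :=
      hext fun n y => by simp [hδS, hWS]
    rw [← h1, ← h2, mul_assoc, mul_assoc, ← mul_add, hsum, mul_one]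

end Ampl

/-! ### Families of isometries with mutually orthogonal ranges -/

section Thin
variable {H : Type*} [NormedAddCommGroup H] [InnerProductSpace ℂ H] [CompleteSpace H]

open scoped InnerProductSpace

/-- An operator is thin if it maps the `i`-th basis vector into the closed span of the basis
vectors with index at least `i ^ 2`. The ranges of finitely many thin operators leave room for
further vectors orthogonal to all of them, see `exists_orthogonal_unit`. -/
def Thin (e : HilbertBasis ℕ ℂ H) (T : H →L[ℂ] H) : Prop :=
  ∀ i j, j < i ^ 2 → ⟪e j, T (e i)⟫_ℂ = 0

lemma exists_unit_of_card_lt (e : HilbertBasis ℕ ℂ H) (K : Finset H) {N : ℕ} (hN : K.card < N) :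
    ∃ a : Fin N → ℂ, ‖∑ j, a j • e j‖ = 1 ∧ ∀ k ∈ K, ⟪k, ∑ j, a j • e j⟫_ℂ = 0 := by
  let v : (Fin N → ℂ) →ₗ[ℂ] H := Fintype.linearCombination ℂ (fun j : Fin N => e j)
  have hv : ∀ a, v a = ∑ j, a j • e j := fun a => Fintype.linearCombination_apply ℂ _ a
  let Φ : (Fin N → ℂ) →ₗ[ℂ] (K → ℂ) :=
    LinearMap.pi fun k => (innerSL ℂ (k : H)).toLinearMap ∘ₗ v
  have hker : LinearMap.ker Φ ≠ ⊥ := LinearMap.ker_ne_bot_of_finrank_lt (by simpa using hN)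
  obtain ⟨a, ha, ha0⟩ := Submodule.exists_mem_ne_zero_of_ne_bot hker
  have hli : LinearIndependent ℂ (fun j : Fin N => e j) :=
    (e.orthonormal.comp (fun j : Fin N => (j : ℕ)) Fin.val_injective).linearIndependent
  have hva : v a ≠ 0 := by
    intro h
    rw [hv] at h
    exact ha0 (funext (Fintype.linearIndependent_iff.1 hli a h))
  have horth : ∀ k ∈ K, ⟪k, v a⟫_ℂ = 0 := by
    intro k hk
    exact congrFun (LinearMap.mem_ker.1 ha) ⟨k, hk⟩
  have hs : ∑ j, (((‖v a‖⁻¹ : ℝ) : ℂ) • a) j • e j = ((‖v a‖⁻¹ : ℝ) : ℂ) • v a := by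
    rw [← hv, map_smul]
  refine ⟨((‖v a‖⁻¹ : ℝ) : ℂ) • a, ?_, fun k hk => ?_⟩
  · rw [hs, norm_smul, Complex.norm_real, norm_inv, norm_norm,
      inv_mul_cancel₀ (norm_ne_zero_iff.2 hva)]
  · rw [hs, inner_smul_right, horth k hk, mul_zero]

/-- Orthogonality to the ranges of `m` thin operators and to a finite set `F` amounts, for a
vector in the span of the first `n ^ 2` basis vectors, to `m * n + #F` linear equations. -/
lemma exists_orthogonal_unit (e : HilbertBasis ℕ ℂ H) (𝒯 : Finset (H →L[ℂ] H))
    (h𝒯 : ∀ T ∈ 𝒯, Thin e T) (F : Finset H) :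
    ∃ v : H, ‖v‖ = 1 ∧ (∀ T ∈ 𝒯, ∀ i, ⟪T (e i), v⟫_ℂ = 0) ∧ ∀ f ∈ F, ⟪f, v⟫_ℂ = 0 := by
  classical
  set n := 𝒯.card + F.card + 1 with hn
  let K : Finset H := (𝒯 ×ˢ Finset.range n).image (fun p => p.1 (e p.2)) ∪ F
  have hK : K.card < n ^ 2 := by
    have h1 : K.card ≤ 𝒯.card * n + F.card := by
      refine (Finset.card_union_le _ _).trans (Nat.add_le_add_right ?_ _)
      refine Finset.card_image_le.trans ?_
      rw [Finset.card_product, Finset.card_range]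
    nlinarith
  obtain ⟨a, ha, hort⟩ := exists_unit_of_card_lt e K hK
  refine ⟨_, ha, fun T hT i => ?_, fun f hf => hort f (Finset.mem_union_right _ hf)⟩
  by_cases hi : i < n
  · exact hort _ (Finset.mem_union_left _ (Finset.mem_image.2
      ⟨(T, i), Finset.mem_product.2 ⟨hT, Finset.mem_range.2 hi⟩, rfl⟩))
  · rw [inner_sum]
    refine Finset.sum_eq_zero fun j _ => ?_
    rw [inner_smul_right, inner_eq_zero_symm.1 (h𝒯 T hT i j ?_), mul_zero]
    exact j.2.trans_le (Nat.pow_le_pow_left (not_lt.1 hi) 2)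

/-- The vectors `c n` are chosen one after the other, each orthogonal to finitely many given vectors
and to the ranges of the operators in `𝒯`. -/
lemma exists_sequence (e : HilbertBasis ℕ ℂ H) (𝒯 : Finset (H →L[ℂ] H))
    (h𝒯 : ∀ T ∈ 𝒯, Thin e T) (G : Finset (H →L[ℂ] H)) (hG : ∀ g ∈ G, star g ∈ G) :
    ∃ c : ℕ → H, (∀ n, ‖c n‖ = 1) ∧ (∀ g ∈ G, ∀ m n, m ≠ n → ⟪g (c m), c n⟫_ℂ = 0) ∧
      (∀ g ∈ G, ∀ n j, j < n ^ 2 → ⟪e j, g (c n)⟫_ℂ = 0) ∧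
      ∀ T ∈ 𝒯, ∀ i n, ⟪T (e i), c n⟫_ℂ = 0 := by
  classical
  obtain ⟨f, hf1, hf2⟩ := exists_seq_of_forall_finset_exists
    (fun p : ℕ × H => ‖p.2‖ = 1 ∧ (∀ g ∈ G, ∀ j < p.1 ^ 2, ⟪g (e j), p.2⟫_ℂ = 0) ∧
      ∀ T ∈ 𝒯, ∀ i, ⟪T (e i), p.2⟫_ℂ = 0)
    (fun p q => p.1 < q.1 ∧ ∀ g ∈ G, ⟪g p.2, q.2⟫_ℂ = 0) (by
      intro s _
      obtain ⟨v, hv1, hv2, hv3⟩ := exists_orthogonal_unit e 𝒯 h𝒯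
        ((G ×ˢ Finset.range ((s.sup Prod.fst + 1) ^ 2)).image (fun p => p.1 (e p.2)) ∪
          (G ×ˢ s).image (fun p => p.1 p.2.2))
      refine ⟨(s.sup Prod.fst + 1, v), ⟨hv1, fun g hg j hj => ?_, hv2⟩, fun x hx =>
        ⟨Nat.lt_succ_of_le (Finset.le_sup (f := Prod.fst) hx), fun g hg => ?_⟩⟩
      · exact hv3 _ (Finset.mem_union_left _ (Finset.mem_image.2 ⟨(g, j), by simp_all, rfl⟩))
      · exact hv3 _ (Finset.mem_union_right _ (Finset.mem_image.2 ⟨(g, x), by simp_all, rfl⟩)))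
  have hmono : StrictMono fun n => (f n).1 := fun m n h => (hf2 m n h).1
  have hstar : ∀ (g : H →L[ℂ] H) (x y : H), ⟪g x, y⟫_ℂ = 0 → ⟪star g y, x⟫_ℂ = 0 := by
    intro g x y h
    rw [ContinuousLinearMap.star_eq_adjoint, ContinuousLinearMap.adjoint_inner_left]
    exact inner_eq_zero_symm.1 h
  refine ⟨fun n => (f n).2, fun n => (hf1 n).1, fun g hg m n hmn => ?_, fun g hg n j hj => ?_,
    fun T hT i n => (hf1 n).2.2 T hT i⟩
  · rcases lt_or_gt_of_ne hmn with h | h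
    · exact (hf2 m n h).2 g hg
    · simpa using hstar _ _ _ ((hf2 n m h).2 _ (hG g hg))
  · have h1 := (hf1 n).2.1 _ (hG g hg) j
      (hj.trans_le (Nat.pow_le_pow_left (hmono.id_le n) 2))
    exact inner_eq_zero_symm.1 (by simpa using hstar _ _ _ h1)

/-- An isometry `C` such that, for all `g` in the finite set `G`, `g C` is thin and the matrix of
`C* g C` is diagonal. -/
structure Good (e : HilbertBasis ℕ ℂ H) (G : Finset (H →L[ℂ] H)) (C : H →L[ℂ] H) : Prop where
  isom : star C * C = 1
  thin : ∀ g ∈ G, Thin e (g * C)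
  diag : ∀ g ∈ G, ∀ i j, i ≠ j → ⟪C (e i), g (C (e j))⟫_ℂ = 0

lemma exists_good (e : HilbertBasis ℕ ℂ H) (𝒯 : Finset (H →L[ℂ] H))
    (h𝒯 : ∀ T ∈ 𝒯, Thin e T) (G : Finset (H →L[ℂ] H)) (hG : ∀ g ∈ G, star g ∈ G)
    (hG1 : 1 ∈ G) : ∃ C, Good e G C ∧ ∀ T ∈ 𝒯, star C * T = 0 := by
  obtain ⟨c, hc1, hc2, hc3, hc4⟩ := exists_sequence e 𝒯 h𝒯 G hG
  obtain ⟨C, hC⟩ := exists_isometry e (c := c) ⟨hc1, fun m n h => hc2 1 hG1 m n h⟩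
  refine ⟨C.toContinuousLinearMap, ⟨star_mul_self_of_isometry C, fun g hg i j hij => ?_,
    fun g hg i j hij => ?_⟩, fun T hT => ?_⟩
  · simpa [hC] using hc3 g hg i j hij
  · have := inner_eq_zero_symm.1 (hc2 g hg j i hij.symm)
    simpa [hC] using this
  · refine ext_inner_basis e fun i j => ?_
    rw [mul_apply_eq_comp, ContinuousLinearMap.star_eq_adjoint,
      ContinuousLinearMap.adjoint_inner_right]
    simpa [hC] using inner_eq_zero_symm.1 (hc4 T hT j i)

/-- The isometries `C σ` are chosen by well-founded recursion on `σ`. -/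
lemma exists_good_family (e : HilbertBasis ℕ ℂ H) {ι : Type*}
    (G : Finset ι → Finset (H →L[ℂ] H)) (hG : ∀ σ, ∀ g ∈ G σ, star g ∈ G σ)
    (hG1 : ∀ σ, 1 ∈ G σ) : ∃ C : Finset ι → (H →L[ℂ] H), (∀ σ, Good e (G σ) (C σ)) ∧
      ∀ σ τ, τ ⊂ σ → ∀ g ∈ G τ, star (C σ) * (g * C τ) = 0 := by
  classical
  have step : ∀ σ : Finset ι, ∀ D : (∀ τ, τ ⊂ σ → {C // Good e (G τ) C}),
      ∃ C : {C // Good e (G σ) C}, ∀ τ (h : τ ⊂ σ), ∀ g ∈ G τ,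
        star C.1 * (g * (D τ h).1) = 0 := by
    intro σ D
    let 𝒯 : Finset (H →L[ℂ] H) := σ.ssubsets.attach.biUnion fun τ =>
      (G τ.1).image fun g => g * (D τ.1 (Finset.mem_ssubsets.1 τ.2)).1
    obtain ⟨C, hC, hC'⟩ := exists_good e 𝒯 (by
      intro T hT
      obtain ⟨τ, -, hτ⟩ := Finset.mem_biUnion.1 hT
      obtain ⟨g, hg, rfl⟩ := Finset.mem_image.1 hτ
      exact (D τ.1 _).2.thin g hg) (G σ) (hG σ) (hG1 σ)
    refine ⟨⟨C, hC⟩, fun τ h g hg => hC' _ ?_⟩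
    exact Finset.mem_biUnion.2 ⟨⟨τ, Finset.mem_ssubsets.2 h⟩, Finset.mem_attach _ _,
      Finset.mem_image_of_mem _ hg⟩
  choose next hnext using step
  have wf : WellFounded fun τ σ : Finset ι => τ ⊂ σ := wellFounded_lt
  let D : ∀ σ, {C // Good e (G σ) C} := wf.fix next
  have hD : ∀ σ, D σ = next σ fun τ _ => D τ := fun σ => wf.fix_eq next σ
  refine ⟨fun σ => (D σ).1, fun σ => (D σ).2, fun σ τ h g hg => ?_⟩
  have := hnext σ (fun τ _ => D τ) τ h g hg
  rwa [← hD] at this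

/-- For every finite set `σ` of indices, two isometries `A σ`, `B σ`. For comparable `σ` and `τ`
their ranges are mutually orthogonal, and for `α ∈ σ ∩ τ` the range of `B σ` is also
orthogonal to that of `u α * A τ`. -/
lemma exists_families (e : HilbertBasis ℕ ℂ H) {ι : Type*} (u : ι → (H →L[ℂ] H)) :
    ∃ A B : Finset ι → (H →L[ℂ] H),
      (∀ σ, star (A σ) * A σ = 1) ∧ (∀ σ, star (B σ) * B σ = 1) ∧
      ∀ σ τ, (σ ⊆ τ ∨ τ ⊆ σ) →
        (σ ≠ τ → star (A σ) * A τ = 0) ∧ (σ ≠ τ → star (B σ) * B τ = 0) ∧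
        star (B σ) * A τ = 0 ∧ ∀ α ∈ σ, α ∈ τ → star (B σ) * u α * A τ = 0 := by
  classical
  let G : Finset ι → Finset (H →L[ℂ] H) := fun σ =>
    insert 1 (σ.image u ∪ σ.image fun α => star (u α))
  have hG1 : ∀ σ, 1 ∈ G σ := fun σ => Finset.mem_insert_self _ _
  have hGu : ∀ σ, ∀ α ∈ σ, u α ∈ G σ := fun σ α h => Finset.mem_insert_of_mem
    (Finset.mem_union_left _ (Finset.mem_image_of_mem _ h))
  have hG : ∀ σ, ∀ g ∈ G σ, star g ∈ G σ := by
    intro σ g hg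
    simp only [G, Finset.mem_insert, Finset.mem_union, Finset.mem_image] at hg ⊢
    rcases hg with rfl | ⟨α, hα, rfl⟩ | ⟨α, hα, rfl⟩
    · simp
    · exact Or.inr (Or.inr ⟨α, hα, rfl⟩)
    · exact Or.inr (Or.inl ⟨α, hα, by simp⟩)
  obtain ⟨C, hC, hC'⟩ := exists_good_family e G hG hG1
  have hoff : ∀ σ τ, (σ ⊆ τ ∨ τ ⊆ σ) → σ ≠ τ → ∀ g, g ∈ G σ → g ∈ G τ →
      star (C σ) * (g * C τ) = 0 := by
    intro σ τ hστ hne g h1 h2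
    rcases hστ with h | h
    · have := congrArg star (hC' τ σ (h.ssubset_of_ne hne) _ (hG σ g h1))
      simpa [mul_assoc] using this
    · exact hC' σ τ (h.ssubset_of_ne hne.symm) g h2
  obtain ⟨V₀, hV₀⟩ := exists_isometry e (e.orthonormal.comp (fun i => 2 * i) fun i j h => by
      simpa using h)
  obtain ⟨V₁, hV₁⟩ := exists_isometry e (e.orthonormal.comp (fun i => 2 * i + 1) fun i j h => by
      simpa using h)
  have hV₀1 := star_mul_self_of_isometry V₀
  have hV₁1 := star_mul_self_of_isometry V₁
  set W₀ := V₀.toContinuousLinearMap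
  set W₁ := V₁.toContinuousLinearMap
  have hBgA : ∀ σ τ, (σ ⊆ τ ∨ τ ⊆ σ) → ∀ g, g ∈ G σ → g ∈ G τ →
      star W₁ * (star (C σ) * (g * C τ)) * W₀ = 0 := by
    intro σ τ hστ g h1 h2
    by_cases hne : σ = τ
    · subst hne
      refine ext_inner_basis e fun i j => ?_
      have h := (hC σ).diag g h1 (2 * i + 1) (2 * j) (by omega)
      simp only [mul_apply_eq_comp, ContinuousLinearMap.star_eq_adjoint,
        ContinuousLinearMap.adjoint_inner_right]
      simpa [W₀, W₁, hV₀, hV₁] using h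
    · rw [hoff σ τ hστ hne g h1 h2]; simp
  refine ⟨fun σ => C σ * W₀, fun σ => C σ * W₁, fun σ => ?_, fun σ => ?_, fun σ τ hστ =>
    ⟨fun hne => ?_, fun hne => ?_, ?_, fun α h1 h2 => ?_⟩⟩
  · rw [star_mul, mul_assoc, ← mul_assoc (star (C σ)), (hC σ).isom, one_mul, hV₀1]
  · rw [star_mul, mul_assoc, ← mul_assoc (star (C σ)), (hC σ).isom, one_mul, hV₁1]
  · have := hoff σ τ hστ hne 1 (hG1 σ) (hG1 τ)
    rw [one_mul] at this
    rw [star_mul, mul_assoc, ← mul_assoc (star (C σ)), this]; simp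
  · have := hoff σ τ hστ hne 1 (hG1 σ) (hG1 τ)
    rw [one_mul] at this
    rw [star_mul, mul_assoc, ← mul_assoc (star (C σ)), this]; simp
  · simpa [mul_assoc] using hBgA σ τ hστ 1 (hG1 σ) (hG1 τ)
  · simpa [mul_assoc] using hBgA σ τ hστ (u α) (hGu σ α h1) (hGu τ α h2)

end Thin

/-! ### Gluing with a partition of unity -/

section Glue
open Function

/-- The functions `c σ` play the role of a partition of unity subordinate to the barycentric
subdivision of the nerve: the sets `σ` that are active at a given point form a chain. Before
normalisation, `c σ` is supported where each `φ α` with `α ∈ σ` exceeds the total mass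
`1 - ∑ β ∈ σ, φ β` outside `σ`. -/
lemma exists_weights {X ι : Type*} [TopologicalSpace X] (φ : PartitionOfUnity ι X) :
    ∃ c : Finset ι → X → ℝ, (∀ σ, Continuous (c σ)) ∧ LocallyFinite (fun σ => support (c σ)) ∧
      (∀ x, ∑ᶠ σ, c σ x ^ 2 = 1) ∧
      (∀ x σ τ, c σ x ≠ 0 → c τ x ≠ 0 → σ ⊆ τ ∨ τ ⊆ σ) ∧
      ∀ x σ, c σ x ≠ 0 → σ.Nonempty ∧ ∀ α ∈ σ, φ α x ≠ 0 := by
  classical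
  let ψ : Finset ι → X → ℝ := fun σ x =>
    (∏ α ∈ σ, max 0 (φ α x - 1 + ∑ β ∈ σ, φ β x)) * ∑ β ∈ σ, φ β x
  have hψ : ∀ σ, Continuous (ψ σ) := by
    intro σ
    have h : ∀ α, Continuous fun x => φ α x := fun α => (φ α).continuous
    fun_prop
  have hle : ∀ x (σ : Finset ι), ∑ β ∈ σ, φ β x ≤ 1 := by
    intro x σ
    refine le_trans ?_ (φ.sum_finsupport' (Set.mem_univ x)
      (I := σ ∪ φ.finsupport x) Finset.subset_union_right).le
    exact Finset.sum_le_sum_of_subset_of_nonneg Finset.subset_union_left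
      fun i _ _ => φ.nonneg i x
  have hact : ∀ x σ, ψ σ x ≠ 0 → σ.Nonempty ∧ ∀ α ∈ σ, 1 - ∑ β ∈ σ, φ β x < φ α x := by
    intro x σ h
    refine ⟨?_, fun α hα => ?_⟩
    · rw [Finset.nonempty_iff_ne_empty]
      rintro rfl
      simp [ψ] at h
    · by_contra hcon
      have hz : max 0 (φ α x - 1 + ∑ β ∈ σ, φ β x) = 0 := max_eq_left (by linarith)
      refine h ?_
      simp only [ψ]
      rw [Finset.prod_eq_zero hα hz, zero_mul]
  have hactφ : ∀ x σ, ψ σ x ≠ 0 → ∀ α ∈ σ, φ α x ≠ 0 := by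
    intro x σ h α hα
    have h1 := (hact x σ h).2 α hα
    have h2 := hle x σ
    linarith
  have hcomp : ∀ x σ τ, ψ σ x ≠ 0 → ψ τ x ≠ 0 → σ ⊆ τ ∨ τ ⊆ σ := by
    intro x σ τ hσ hτ
    by_contra! hcon
    obtain ⟨α, hα, hα'⟩ := Finset.not_subset.1 hcon.1
    obtain ⟨β, hβ, hβ'⟩ := Finset.not_subset.1 hcon.2
    have h1 := (hact x σ hσ).2 α hα
    have h2 := (hact x τ hτ).2 β hβ
    have h3 := hle x (insert β σ)
    have h4 := hle x (insert α τ)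
    rw [Finset.sum_insert hβ'] at h3
    rw [Finset.sum_insert hα'] at h4
    linarith
  have hlf : LocallyFinite fun σ => support (ψ σ) := by
    intro x
    obtain ⟨I, hI⟩ := φ.exists_finset_nhds x
    refine ⟨_, hI, (I.powerset.finite_toSet).subset ?_⟩
    rintro σ ⟨y, hy, hyI⟩
    refine Finset.mem_coe.2 (Finset.mem_powerset.2 fun α hα => ?_)
    exact hyI.2 (hactφ y σ hy α hα)
  have hlf2 : LocallyFinite fun σ => support fun x => ψ σ x ^ 2 :=
    hlf.subset fun σ x hx h => hx (by simp [h])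
  let N : X → ℝ := fun x => ∑ᶠ σ, ψ σ x ^ 2
  have hNc : Continuous N := continuous_finsum (fun σ => (hψ σ).pow 2) hlf2
  have hNpos : ∀ x, 0 < N x := by
    intro x
    have h1 : ψ (φ.finsupport x) x ≠ 0 := by
      have hs := φ.sum_finsupport (Set.mem_univ x)
      simp only [ψ, hs]
      rw [mul_one, Finset.prod_ne_zero_iff]
      intro α hα
      have : 0 < φ α x := lt_of_le_of_ne (φ.nonneg α x) (Ne.symm (by simpa using hα))
      rw [sub_add_cancel]
      exact (lt_max_of_lt_right this).ne'
    refine lt_of_lt_of_le (by positivity : 0 < ψ (φ.finsupport x) x ^ 2) ?_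
    exact single_le_finsum (f := fun σ => ψ σ x ^ 2) _ (hlf2.point_finite x)
      fun σ => sq_nonneg _
  have hsq : ∀ x, √(N x) ≠ 0 := fun x => (Real.sqrt_pos.2 (hNpos x)).ne'
  have hne : ∀ x σ, ψ σ x / √(N x) ≠ 0 → ψ σ x ≠ 0 := fun x σ h h0 => h (by simp [h0])
  refine ⟨fun σ x => ψ σ x / √(N x), fun σ => (hψ σ).div hNc.sqrt hsq,
    hlf.subset fun σ x hx => hne x σ hx, fun x => ?_,
    fun x σ τ hσ hτ => hcomp x σ τ (hne x σ hσ) (hne x τ hτ),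
    fun x σ h => ⟨(hact x σ (hne x σ h)).1, hactφ x σ (hne x σ h)⟩⟩
  have h1 : ∀ σ, (ψ σ x / √(N x)) ^ 2 = ψ σ x ^ 2 * (N x)⁻¹ := by
    intro σ
    rw [div_pow, Real.sq_sqrt (hNpos x).le, div_eq_mul_inv]
  simp_rw [h1]
  rw [← finsum_mul' _ _ (hlf2.point_finite x)]
  exact mul_inv_cancel₀ (hNpos x).ne'

variable {H : Type*} [NormedAddCommGroup H] [InnerProductSpace ℂ H] [CompleteSpace H]

lemma sum_star_mul_mul_sum {κ : Type*} (s : Finset κ) (c : κ → ℝ) (P Q : κ → (H →L[ℂ] H))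
    (g : H →L[ℂ] H) :
    star (∑ σ ∈ s, (c σ : ℂ) • P σ) * g * (∑ τ ∈ s, (c τ : ℂ) • Q τ) =
      ∑ σ ∈ s, ∑ τ ∈ s, ((c σ : ℂ) * c τ) • (star (P σ) * g * Q τ) := by
  rw [star_sum, Finset.sum_mul, Finset.sum_mul]
  refine Finset.sum_congr rfl fun σ _ => ?_
  rw [Finset.mul_sum]
  refine Finset.sum_congr rfl fun τ _ => ?_
  rw [star_smul, Complex.star_def, Complex.conj_ofReal, smul_mul_assoc, smul_mul_assoc,
    mul_smul_comm, smul_smul]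

lemma norm_le_one_of_isometry {C : H →L[ℂ] H} (h : star C * C = 1) : ‖C‖ ≤ 1 := by
  have h1 : ‖C‖ * ‖C‖ ≤ 1 := by
    rw [← CStarRing.norm_star_mul_self, h]
    exact ContinuousLinearMap.norm_id_le
  nlinarith [norm_nonneg C]

/-- Two norm-continuous families of isometries `A`, `B` over the unitary group, such that the range
of `B u` is orthogonal to that of `A u` and nearly orthogonal to that of `u A u`. -/
lemma exists_continuous_isometries (e : HilbertBasis ℕ ℂ H) :
    ∃ A B : unitary (H →L[ℂ] H) → (H →L[ℂ] H), Continuous A ∧ Continuous B ∧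
      (∀ x, star (A x) * A x = 1) ∧ (∀ x, star (B x) * B x = 1) ∧
      (∀ x, star (B x) * A x = 0) ∧ ∀ x, ‖star (B x) * x * A x‖ ≤ 1 / 2 := by
  classical
  obtain ⟨φ, hφ⟩ := PartitionOfUnity.exists_isSubordinate (X := unitary (H →L[ℂ] H))
    isClosed_univ (fun α : unitary (H →L[ℂ] H) => Metric.ball α (1 / 2))
    (fun α => Metric.isOpen_ball)
    (fun x _ => Set.mem_iUnion.2 ⟨x, Metric.mem_ball_self (by norm_num)⟩)
  obtain ⟨c, hc, hlf, hsum, hcomp, hact⟩ := exists_weights φ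
  obtain ⟨A, B, hA, hB, hAB⟩ := exists_families e
    (fun α : unitary (H →L[ℂ] H) => (α : H →L[ℂ] H))
  let s : unitary (H →L[ℂ] H) → Finset (Finset (unitary (H →L[ℂ] H))) := fun x =>
    (hlf.point_finite x).toFinset
  have hs : ∀ x σ, σ ∈ s x ↔ c σ x ≠ 0 := fun x σ => by simp [s]
  have hfin : ∀ (P : Finset (unitary (H →L[ℂ] H)) → (H →L[ℂ] H)) x,
      ∑ᶠ σ, (c σ x : ℂ) • P σ = ∑ σ ∈ s x, (c σ x : ℂ) • P σ := by
    intro P x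
    refine finsum_eq_sum_of_support_subset _ fun σ hσ => ?_
    rw [Finset.mem_coe, hs]
    intro h
    exact hσ (by simp [h])
  have hcont : ∀ P : Finset (unitary (H →L[ℂ] H)) → (H →L[ℂ] H),
      Continuous fun x => ∑ᶠ σ, (c σ x : ℂ) • P σ := by
    intro P
    refine continuous_finsum (fun σ =>
      (Complex.continuous_ofReal.comp (hc σ)).smul continuous_const)
      (hlf.subset fun σ x hx h => hx (by simp [h]))
  have hsum' : ∀ x, ∑ σ ∈ s x, (c σ x : ℂ) * c σ x = 1 := by
    intro x
    have h1 : ∑ σ ∈ s x, c σ x ^ 2 = 1 := by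
      rw [← hsum x]
      refine (finsum_eq_sum_of_support_subset _ fun σ hσ => ?_).symm
      rw [Finset.mem_coe, hs]
      intro h
      exact hσ (by simp [h])
    have h2 := congrArg (fun r : ℝ => (r : ℂ)) h1
    simpa [sq] using h2
  -- The active sets at `x` form a chain, so only the diagonal terms of `P(x)* P(x)` survive.
  have hisom : ∀ P : Finset (unitary (H →L[ℂ] H)) → (H →L[ℂ] H), (∀ σ, star (P σ) * P σ = 1) →
      (∀ σ τ, (σ ⊆ τ ∨ τ ⊆ σ) → σ ≠ τ → star (P σ) * P τ = 0) → ∀ x,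
      star (∑ᶠ σ, (c σ x : ℂ) • P σ) * (∑ᶠ σ, (c σ x : ℂ) • P σ) = 1 := by
    intro P h1 h2 x
    have h3 := sum_star_mul_mul_sum (s x) (fun σ => c σ x) P P 1
    rw [mul_one] at h3
    rw [hfin, h3]
    have h4 : ∀ σ ∈ s x, ∑ τ ∈ s x, ((c σ x : ℂ) * c τ x) • (star (P σ) * 1 * P τ) =
        ((c σ x : ℂ) * c σ x) • (1 : H →L[ℂ] H) := by
      intro σ hσ
      rw [Finset.sum_eq_single σ, mul_one, h1]
      · intro τ hτ hne
        rw [mul_one, h2 σ τ (hcomp x σ τ ((hs x σ).1 hσ) ((hs x τ).1 hτ)) hne.symm, smul_zero]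
      · exact fun h => absurd hσ h
    rw [Finset.sum_congr rfl h4, ← Finset.sum_smul, hsum', one_smul]
  have hA' := hisom A hA fun σ τ h => (hAB σ τ h).1
  have hB' := hisom B hB fun σ τ h => (hAB σ τ h).2.1
  have hzero : ∀ x g, (∀ σ ∈ s x, ∀ τ ∈ s x, star (B σ) * g * A τ = 0) →
      star (∑ᶠ σ, (c σ x : ℂ) • B σ) * g * (∑ᶠ σ, (c σ x : ℂ) • A σ) = 0 := by
    intro x g h
    rw [hfin, hfin, sum_star_mul_mul_sum (s x) (fun σ => c σ x) B A g]
    refine Finset.sum_eq_zero fun σ hσ => Finset.sum_eq_zero fun τ hτ => ?_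
    rw [h σ hσ τ hτ, smul_zero]
  refine ⟨_, _, hcont A, hcont B, hA', hB', fun x => ?_, fun x => ?_⟩
  · have h := hzero x 1 fun σ hσ τ hτ => by
      rw [mul_one]
      exact (hAB σ τ (hcomp x σ τ ((hs x σ).1 hσ) ((hs x τ).1 hτ))).2.2.1
    rwa [mul_one] at h
  · -- An index `α` in the smallest active set lies in all active sets.
    have hne : (s x).Nonempty := by
      by_contra h
      have := hsum' x
      rw [Finset.not_nonempty_iff_eq_empty.1 h] at this
      simp at this
    obtain ⟨σ₀, hσ₀, hmin⟩ := Finset.exists_min_image (s x) Finset.card hne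
    have hsub : ∀ τ ∈ s x, σ₀ ⊆ τ := by
      intro τ hτ
      rcases hcomp x σ₀ τ ((hs x σ₀).1 hσ₀) ((hs x τ).1 hτ) with h | h
      · exact h
      · exact (Finset.eq_of_subset_of_card_le h (hmin τ hτ)).symm.subset
    obtain ⟨⟨α, hα⟩, hφα⟩ := hact x σ₀ ((hs x σ₀).1 hσ₀)
    have hdist : ‖(x : H →L[ℂ] H) - α‖ ≤ 1 / 2 := by
      have h1 : x ∈ Metric.ball α (1 / 2) := hφ α (subset_tsupport _ (hφα α hα))
      rw [← dist_eq_norm, ← Subtype.dist_eq]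
      exact (Metric.mem_ball.1 h1).le
    have h0 := hzero x α fun σ hσ τ hτ =>
      (hAB σ τ (hcomp x σ τ ((hs x σ).1 hσ) ((hs x τ).1 hτ))).2.2.2 α (hsub σ hσ hα)
        (hsub τ hτ hα)
    generalize hP : (∑ᶠ σ, (c σ x : ℂ) • A σ) = P at *
    generalize hQ : (∑ᶠ σ, (c σ x : ℂ) • B σ) = Q at *
    have hPn : ‖P‖ ≤ 1 := norm_le_one_of_isometry (hP ▸ hA' x)
    have hQn : ‖star Q‖ ≤ 1 := by rw [norm_star]; exact norm_le_one_of_isometry (hQ ▸ hB' x)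
    have h1 : star Q * x * P = star Q * ((x : H →L[ℂ] H) - α) * P := by
      rw [mul_sub, sub_mul, h0, sub_zero]
    calc ‖star Q * x * P‖ = ‖star Q * ((x : H →L[ℂ] H) - α) * P‖ := by rw [h1]
      _ ≤ ‖star Q‖ * ‖(x : H →L[ℂ] H) - α‖ * ‖P‖ := norm_mul₃_le
      _ ≤ 1 * (1 / 2) * 1 := by gcongr
      _ = 1 / 2 := by norm_num

end Glue

/-! ### Contractibility -/

section Final
variable {H : Type*} [NormedAddCommGroup H] [InnerProductSpace ℂ H] [CompleteSpace H]

/-- If `P`, `B` are isometries and `E = B* P` has norm less than one, then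
`(1 - E* E)⁻¹ (P - B E)*` is a left inverse of `P` that vanishes on the range of `B`. -/
lemma left_inverse {P B s : H →L[ℂ] H} (hP : star P * P = 1) (hB : star B * B = 1)
    (hs : s * (1 - star (star B * P) * (star B * P)) = 1) :
    s * star (P - B * (star B * P)) * P = 1 ∧ s * star (P - B * (star B * P)) * B = 0 := by
  constructor
  · rw [← hs, mul_assoc]
    congr 1
    simp only [star_sub, star_mul, star_star, sub_mul, hP, mul_assoc]
  · rw [mul_assoc]
    simp only [star_sub, star_mul, star_star, sub_mul, mul_assoc, hB, mul_one, sub_self, mul_zero]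

lemma null_val (e : HilbertBasis ℕ ℂ H) :
    Null (Subtype.val : unitary (H →L[ℂ] H) → (H →L[ℂ] H)) := by
  obtain ⟨A, B, cA, cB, hA, hB, hBA, hE⟩ := exists_continuous_isometries e
  obtain ⟨V, W, δ, hV, hW, hVW, hsum, cδ, δ1, δm, hδ⟩ := exists_swindle_data e
  let P : unitary (H →L[ℂ] H) → (H →L[ℂ] H) := fun x => x * A x
  have cP : Continuous P := continuous_subtype_val.mul cA
  let E : unitary (H →L[ℂ] H) → (H →L[ℂ] H) := fun x => star (B x) * P x
  have cE : Continuous E := cB.star.mul cP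
  have hP : ∀ x, star (P x) * P x = 1 := by
    intro x
    have h : star (x : H →L[ℂ] H) * x = 1 := Unitary.star_mul_self_of_mem x.2
    simp only [P, star_mul]
    rw [mul_assoc, ← mul_assoc (star (x : H →L[ℂ] H)), h, one_mul, hA]
  have hunit : ∀ x, IsUnit (1 - star (E x) * E x) := by
    intro x
    refine isUnit_one_sub_of_norm_lt_one ?_
    have h : ‖E x‖ ≤ 1 / 2 := by simpa [E, P, mul_assoc] using hE x
    rw [CStarRing.norm_star_mul_self]
    nlinarith [norm_nonneg (E x)]
  have cs : Continuous fun x => Ring.inverse (1 - star (E x) * E x) := by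
    refine continuous_iff_continuousAt.2 fun x => ?_
    obtain ⟨w, hw⟩ := hunit x
    have h1 : ContinuousAt Ring.inverse (1 - star (E x) * E x) := by
      rw [← hw]; exact NormedRing.inverse_continuousAt w
    exact ContinuousAt.comp (f := fun x => 1 - star (E x) * E x) h1
      (continuous_const.sub (cE.star.mul cE)).continuousAt
  have hL := fun x => left_inverse (hP x) (hB x) (Ring.inverse_mul_cancel _ (hunit x))
  refine null_of_data (u := Subtype.val) (v := fun x => star (x : H →L[ℂ] H)) (A := A) (B := B)
    (L := fun x => Ring.inverse (1 - star (E x) * E x) * star (P x - B x * E x))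
    continuous_subtype_val continuous_subtype_val.star ?_ ?_ cA cB
    (cs.mul (cP.sub (cB.mul cE)).star) (funext hA) (funext hB) (funext hBA)
    (funext fun x => (hL x).1) (funext fun x => (hL x).2) V W hV hW hVW hsum δ cδ δ1 δm hδ
  · exact funext fun x => Unitary.mul_star_self_of_mem x.2
  · exact funext fun x => Unitary.star_mul_self_of_mem x.2

end Final
end Kuiper


/-- Kuiper's theorem (the case of the trivial group in Proposition A3.1): the unitary group
of an infinite-dimensional separable complex Hilbert space, with the norm topology, is
contractible. -/
theorem stmt_10 {H : Type*} [NormedAddCommGroup H] [InnerProductSpace ℂ H] [CompleteSpace H]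
    [TopologicalSpace.SeparableSpace H] (hinf : ¬ FiniteDimensional ℂ H) :
    ContractibleSpace (unitary (H →L[ℂ] H)) := by
  exact Kuiper.contractible_of_null (Kuiper.null_val (Kuiper.exists_basis hinf).some)
end

section
/- Let H be an infinite-dimensional separable complex Hilbert space, X a compact topological space, f : X → B(H) a norm-continuous map with f(x) unitary for every x, and ε > 0. Then there exist three mutually orthogonal closed infinite-dimensional subspaces H₁, H₂, H₃ of H whose (internal orthogonal) direct sum is all of H, such that for every x ∈ X the subspace f(x)(H₁) is ε-orthogonal to H₃, i.e. |⟨f(x)p, q⟩| ≤ ε ‖p‖ ‖q‖ for all x ∈ X, p ∈ H₁ and q ∈ H₃. (Kuiper's lemma; the case of the trivial group in Lemma A3.3.) -/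
/-!
By compactness of `X`, the set `f(X)` is within `ε` of a finite set `S` of operators. Choose
inductively nonzero vectors `v 0, v 1, …`, each orthogonal to all earlier `v j`, `T (v j)` and
`T† (v j)` with `T ∈ S`; this is possible since finitely many vectors never span `H`. Then
`⟪T (v i), v j⟫ = 0` whenever `i ≠ j` and `T ∈ S`, so the closed spans `H₁` of the `v (3 n)` and
`H₃` of the `v (3 n + 1)` satisfy `T H₁ ⟂ H₃` exactly, and replacing `T` by `f x` costs at most `ε`.
The complement `H₂` of `H₁ ⊕ H₃` is infinite-dimensional because it contains the `v (3 n + 2)`.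
-/

/-- In infinite dimension some nonzero vector is orthogonal to any given finite set. -/
lemma exists_ne_zero_orthogonal {H : Type*} [NormedAddCommGroup H] [InnerProductSpace ℂ H]
    (hinf : ¬ FiniteDimensional ℂ H) {s : Set H} (hs : s.Finite) :
    ∃ y : H, y ≠ 0 ∧ ∀ x ∈ s, inner ℂ x y = 0 := by
  have : FiniteDimensional ℂ (Submodule.span ℂ s) := FiniteDimensional.span_of_finite ℂ hs
  have hne : (Submodule.span ℂ s)ᗮ ≠ ⊥ := by
    intro h
    rw [Submodule.orthogonal_eq_bot_iff] at h
    rw [h] at this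
    exact hinf (Module.Finite.equiv (Submodule.topEquiv (R := ℂ) (M := H)))
  obtain ⟨y, hy, hy0⟩ := Submodule.exists_mem_ne_zero_of_ne_bot hne
  exact ⟨y, hy0, fun x hx => (Submodule.mem_orthogonal _ _).1 hy x (Submodule.subset_span hx)⟩

/-- For finitely many operators there is a sequence of nonzero vectors that makes
the matrix of each of them diagonal. It is chosen inductively, orthogonally to the images of the
earlier vectors under the operators and their adjoints. -/
lemma exists_seq_inner_eq_zero {H : Type*} [NormedAddCommGroup H] [InnerProductSpace ℂ H]
    [CompleteSpace H] (hinf : ¬ FiniteDimensional ℂ H) {S : Set (H →L[ℂ] H)} (hS : S.Finite) :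
    ∃ v : ℕ → H, (∀ n, v n ≠ 0) ∧ ∀ T ∈ S, ∀ i j, i ≠ j → inner ℂ (T (v i)) (v j) = 0 := by
  obtain ⟨v, hv0, hv⟩ := exists_seq_of_forall_finset_exists (α := H) (fun y => y ≠ 0)
    (fun x y => ∀ T ∈ S, inner ℂ (T x) y = 0 ∧ inner ℂ (T y) x = 0) (by
      intro s _
      obtain ⟨y, hy0, hy⟩ := exists_ne_zero_orthogonal hinf
        (s := Set.image2 (fun T x => T x) S s ∪
          Set.image2 (fun T x => ContinuousLinearMap.adjoint T x) S s)
        ((hS.image2 _ s.finite_toSet).union (hS.image2 _ s.finite_toSet))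
      refine ⟨y, hy0, fun x hx T hT => ⟨hy _ (Or.inl ⟨T, hT, x, hx, rfl⟩), ?_⟩⟩
      rw [← ContinuousLinearMap.adjoint_inner_right, inner_eq_zero_symm]
      exact hy _ (Or.inr ⟨T, hT, x, hx, rfl⟩))
  refine ⟨v, hv0, fun T hT i j hij => ?_⟩
  rcases lt_or_gt_of_ne hij with h | h
  · exact (hv i j h T hT).1
  · exact (hv j i h T hT).2

/-- Vanishing of `⟪T a, b⟫` passes from generators to closed linear spans. -/
lemma inner_eq_zero_of_mem_closure_span {H : Type*} [NormedAddCommGroup H]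
    [InnerProductSpace ℂ H] (T : H →L[ℂ] H) {A B : Set H}
    (h : ∀ a ∈ A, ∀ b ∈ B, inner ℂ (T a) b = 0) {p q : H}
    (hp : p ∈ (Submodule.span ℂ A).topologicalClosure)
    (hq : q ∈ (Submodule.span ℂ B).topologicalClosure) : inner ℂ (T p) q = 0 := by
  have h1 : ∀ a ∈ A, inner ℂ (T a) q = 0 := by
    intro a ha
    have hle : (Submodule.span ℂ B).topologicalClosure ≤ (ℂ ∙ T a)ᗮ :=
      Submodule.topologicalClosure_minimal _
        (Submodule.span_le.2 fun b hb => Submodule.mem_orthogonal_singleton_iff_inner_right.2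
          (h a ha b hb)) (Submodule.isClosed_orthogonal _)
    exact Submodule.mem_orthogonal_singleton_iff_inner_right.1 (hle hq)
  have hle : (Submodule.span ℂ A).topologicalClosure ≤
      ((ℂ ∙ q)ᗮ).comap (T : H →ₗ[ℂ] H) :=
    Submodule.topologicalClosure_minimal _
      (Submodule.span_le.2 fun a ha => Submodule.mem_orthogonal_singleton_iff_inner_left.2
        (h1 a ha)) ((Submodule.isClosed_orthogonal _).preimage T.continuous)
  exact Submodule.mem_orthogonal_singleton_iff_inner_left.1 (hle hp)

lemma not_finiteDimensional_of_orthogonal_seq {H : Type*} [NormedAddCommGroup H]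
    [InnerProductSpace ℂ H] {v : ℕ → H} (hv0 : ∀ n, v n ≠ 0)
    (hv : ∀ i j, i ≠ j → inner ℂ (v i) (v j) = 0) (K : Submodule ℂ H) (hK : ∀ n, v n ∈ K) :
    ¬ FiniteDimensional ℂ K := by
  intro _
  have hli : LinearIndependent ℂ v := linearIndependent_of_ne_zero_of_inner_eq_zero hv0 hv
  have hliK : LinearIndependent ℂ (fun n => (⟨v n, hK n⟩ : K)) :=
    LinearIndependent.of_comp K.subtype hli
  exact not_finite_iff_infinite.2 (inferInstance : Infinite ℕ) hliK.finite

/-- Kuiper's lemma (the case of the trivial group in Lemma A3.3): given a norm-continuous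
family of unitaries `f : X → B(H)` on a compact space and `ε > 0`, there is an orthogonal
decomposition `H = H₁ ⊕ H₂ ⊕ H₃` into closed infinite-dimensional subspaces such that
`f(x)(H₁)` is ε-orthogonal to `H₃` for every `x`. -/
theorem stmt_11 {H : Type*} [NormedAddCommGroup H] [InnerProductSpace ℂ H] [CompleteSpace H]
    [TopologicalSpace.SeparableSpace H] (hinf : ¬ FiniteDimensional ℂ H)
    {X : Type*} [TopologicalSpace X] [CompactSpace X]
    (f : X → H →L[ℂ] H) (hfcont : Continuous f)
    (hfu : ∀ x, f x ∈ unitary (H →L[ℂ] H))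
    (ε : ℝ) (hε : 0 < ε) :
    ∃ H₁ H₂ H₃ : Submodule ℂ H,
      IsClosed (H₁ : Set H) ∧ IsClosed (H₂ : Set H) ∧ IsClosed (H₃ : Set H) ∧
      ¬ FiniteDimensional ℂ H₁ ∧ ¬ FiniteDimensional ℂ H₂ ∧ ¬ FiniteDimensional ℂ H₃ ∧
      (∀ p ∈ H₁, ∀ q ∈ H₂, inner (𝕜 := ℂ) p q = 0) ∧
      (∀ p ∈ H₁, ∀ q ∈ H₃, inner (𝕜 := ℂ) p q = 0) ∧
      (∀ p ∈ H₂, ∀ q ∈ H₃, inner (𝕜 := ℂ) p q = 0) ∧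
      H₁ ⊔ H₂ ⊔ H₃ = ⊤ ∧
      (∀ x : X, ∀ p ∈ H₁, ∀ q ∈ H₃,
        ‖inner (𝕜 := ℂ) (f x p) q‖ ≤ ε * ‖p‖ * ‖q‖) := by
  -- The identity is added to the net so that its vanishing condition yields orthogonality of `v`.
  obtain ⟨S, hS, hnet⟩ := Metric.totallyBounded_iff.1 (isCompact_range hfcont).totallyBounded ε hε
  obtain ⟨v, hv0, hvT⟩ := exists_seq_inner_eq_zero hinf (hS.insert (1 : H →L[ℂ] H))
  have hv : ∀ i j, i ≠ j → inner ℂ (v i) (v j) = 0 := hvT 1 (Set.mem_insert _ _)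
  have hmem : ∀ (g : ℕ → ℕ) n, v (g n) ∈
      (Submodule.span ℂ (Set.range fun n => v (g n))).topologicalClosure := fun g n =>
    Submodule.le_topologicalClosure _ (Submodule.subset_span ⟨n, rfl⟩)
  have hcross : ∀ T ∈ insert 1 S, ∀ g k : ℕ → ℕ, (∀ m n, g m ≠ k n) →
      ∀ p ∈ (Submodule.span ℂ (Set.range fun n => v (g n))).topologicalClosure,
      ∀ q ∈ (Submodule.span ℂ (Set.range fun n => v (k n))).topologicalClosure,
        inner ℂ (T p) q = 0 := by
    intro T hT g k hgk p hp q hq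
    refine inner_eq_zero_of_mem_closure_span T ?_ hp hq
    rintro _ ⟨m, rfl⟩ _ ⟨n, rfl⟩
    exact hvT T hT _ _ (hgk m n)
  have hone := hcross 1 (Set.mem_insert _ _)
  have hdim : ∀ g : ℕ → ℕ, Function.Injective g → ∀ K : Submodule ℂ H, (∀ n, v (g n) ∈ K) →
      ¬ FiniteDimensional ℂ K := fun g hg K hK =>
    not_finiteDimensional_of_orthogonal_seq (fun n => hv0 (g n))
      (fun i j hij => hv _ _ (hg.ne hij)) K hK
  set H₁ := (Submodule.span ℂ (Set.range fun n => v (3 * n))).topologicalClosure with hH₁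
  set H₃ := (Submodule.span ℂ (Set.range fun n => v (3 * n + 1))).topologicalClosure with hH₃
  have hc₁ : IsClosed (H₁ : Set H) := Submodule.isClosed_topologicalClosure _
  have hc₃ : IsClosed (H₃ : Set H) := Submodule.isClosed_topologicalClosure _
  have : CompleteSpace H₁ := hc₁.completeSpace_coe
  have : CompleteSpace H₃ := hc₃.completeSpace_coe
  have h13 : ∀ p ∈ H₁, ∀ q ∈ H₃, inner ℂ p q = 0 :=
    hone (fun n => 3 * n) (fun n => 3 * n + 1) (by intros; omega)
  refine ⟨H₁, H₃ᗮ ⊓ H₁ᗮ, H₃, hc₁,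
    (Submodule.isClosed_orthogonal _).inter (Submodule.isClosed_orthogonal _), hc₃,
    hdim (fun n => 3 * n) (fun a b h => by simpa using h) _ (hmem _),
    hdim (fun n => 3 * n + 2) (fun a b h => by simpa using h) _ (fun n => ⟨?_, ?_⟩),
    hdim (fun n => 3 * n + 1) (fun a b h => by simpa using h) _ (hmem _),
    fun p hp q hq => hq.2 p hp, h13,
    fun p hp q hq => inner_eq_zero_symm.1 (hp.1 q hq), ?_, ?_⟩
  · exact fun u hu => hone (fun n => 3 * n + 1) (fun n => 3 * n + 2) (by intros; omega) u hu _
      (hmem (fun n => 3 * n + 2) n)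
  · exact fun u hu => hone (fun n => 3 * n) (fun n => 3 * n + 2) (by intros; omega) u hu _
      (hmem (fun n => 3 * n + 2) n)
  · have hle : H₃ ≤ H₁ᗮ := fun q hq p hp => h13 p hp q hq
    rw [sup_assoc, sup_comm _ H₃, Submodule.sup_orthogonal_inf_of_hasOrthogonalProjection hle,
      Submodule.sup_orthogonal_of_hasOrthogonalProjection]
  · intro x p hp q hq
    obtain ⟨T, hT, hxT⟩ := Set.mem_iUnion₂.1 (hnet (Set.mem_range_self x))
    rw [Metric.mem_ball, dist_eq_norm] at hxT
    have hTpq : inner ℂ (T p) q = 0 := hcross T (Set.mem_insert_of_mem _ hT)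
      (fun n => 3 * n) (fun n => 3 * n + 1) (by intros; omega) p hp q hq
    have heq : inner ℂ (f x p) q = inner ℂ ((f x - T) p) q := by
      rw [sub_apply, inner_sub_left, hTpq, sub_zero]
    rw [heq]
    calc ‖inner ℂ ((f x - T) p) q‖ ≤ ‖(f x - T) p‖ * ‖q‖ := norm_inner_le_norm _ _
      _ ≤ ‖f x - T‖ * ‖p‖ * ‖q‖ := by gcongr; exact (f x - T).le_opNorm p
      _ ≤ ε * ‖p‖ * ‖q‖ := by gcongr
end

section
/- Let H be a complex Hilbert space and A, B ∈ B(H) with AB − 1 and BA − 1 compact. Let |B| denote the positive square root of B*B (continuous functional calculus). Then both |B|·A·A*·|B| − 1 and A*·B*·B·A − 1 (= A*·|B|²·A − 1) are compact. Equivalently, the pair (|B|A, A*|B|) again consists of operators that are mutually inverse modulo compact operators. (The modification used in Section 3 to replace a self-adjoint degree-one Fredholm operator with parametrix by one whose square differs from the identity by a compact operator.) -/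
/-!
The compact operators form a two-sided ideal of `B(H)` closed under adjoints, so the claim is
algebra modulo compacts.  With `BA = 1 + K`, the second operator is `(BA)*K + K*`.
For the first, put `P = |B|` and `Q = AA*`.  From `P² = B*B` one gets `P²Q ≡ 1` and `QP² ≡ 1`,
so `QP` and `PQ` are a left and a right inverse of `P` modulo compacts; hence they agree
modulo compacts, and `PQP ≡ QPP ≡ 1`.

The ideal properties are in the library; closure under adjoints is `IsCompactOperator.star_clm`.
-/

set_option synthInstance.maxHeartbeats 1000000
set_option maxHeartbeats 1000000

/-- Schauder's theorem on a Hilbert space.  The estimate `‖T*z‖² ≤ ‖TT*z‖ ‖z‖` turns a finite net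
for the image of the unit ball under the compact operator `TT*` into one for `T*`. -/
lemma IsCompactOperator.star_clm {H : Type*} [NormedAddCommGroup H] [InnerProductSpace ℂ H]
    [CompleteSpace H] {T : H →L[ℂ] H} (hT : IsCompactOperator (⇑T)) :
    IsCompactOperator (⇑(star T)) := by
  have hTT : IsCompactOperator (⇑(T * star T)) := hT.comp_clm (star T)
  have hcompact : IsCompact (closure ((T * star T) '' Metric.closedBall 0 1)) :=
    IsCompactOperator.isCompact_closure_image_closedBall
      (f := (T * star T : H →L[ℂ] H).toLinearMap) hTT 1
  have htb : TotallyBounded ((T * star T) '' Metric.closedBall 0 1) :=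
    hcompact.totallyBounded.subset subset_closure
  refine (isCompactOperator_iff_isCompact_closure_image_closedBall
    (star T : H →L[ℂ] H).toLinearMap one_pos).2 ?_
  refine TotallyBounded.isCompact_of_isClosed (TotallyBounded.closure ?_) isClosed_closure
  rw [Metric.totallyBounded_iff]
  intro ε hε
  -- Points of the unit ball are at distance at most `2`, whence the radius `ε² / 2`.
  obtain ⟨t, hts, htf, hcov⟩ := Metric.finite_approx_of_totallyBounded htb (ε ^ 2 / 2)
    (by positivity)
  obtain ⟨u, hu, huf, rfl⟩ := htf.exists_subset_finite_image_eq hts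
  refine ⟨⇑(star T) '' u, huf.image _, ?_⟩
  rintro _ ⟨x, hx, rfl⟩
  have hxcov := hcov (Set.mem_image_of_mem _ hx)
  simp only [Set.mem_iUnion, Set.mem_image, exists_prop, exists_exists_and_eq_and,
    Metric.mem_ball, dist_eq_norm, ← map_sub] at hxcov ⊢
  obtain ⟨y, hy, hxy⟩ := hxcov
  refine ⟨y, hy, ?_⟩
  change ‖star T x - star T y‖ < ε
  rw [← map_sub]
  have hxn : ‖x‖ ≤ 1 := by simpa using hx
  have hyn : ‖y‖ ≤ 1 := by simpa using hu hy
  have hz : ‖x - y‖ ≤ 2 := (norm_sub_le x y).trans (by linarith)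
  set z := x - y
  have hsq : ‖star T z‖ ^ 2 ≤ ‖(T * star T) z‖ * ‖z‖ := by
    have hinner : ‖star T z‖ ^ 2 = RCLike.re (inner ℂ ((T * star T) z) z) := by
      rw [mul_apply_eq_comp, ContinuousLinearMap.star_eq_adjoint,
        ← ContinuousLinearMap.adjoint_inner_right, inner_self_eq_norm_sq]
    rw [hinner]
    exact re_inner_le_norm _ _
  have hle : ‖(T * star T) z‖ * ‖z‖ ≤ ‖(T * star T) z‖ * 2 := by gcongr
  exact lt_of_pow_lt_pow_left₀ 2 hε.le (by linarith)

/-- The modification used in Section 3: if `B` is a parametrix for `A` (i.e. `AB − 1` and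
`BA − 1` are compact), then, with `|B| = √(B*B)` the positive square root given by the
continuous functional calculus, the pair `(|B|A, A*|B|)` again consists of operators
mutually inverse modulo compact operators: both `|B|·A·A*·|B| − 1` and
`A*·B*·B·A − 1 (= (A*|B|)(|B|A) − 1)` are compact. -/
theorem stmt_16 {H : Type*} [NormedAddCommGroup H] [InnerProductSpace ℂ H] [CompleteSpace H]
    (A B : H →L[ℂ] H)
    (hAB : IsCompactOperator (⇑(A * B - 1)))
    (hBA : IsCompactOperator (⇑(B * A - 1))) :
    IsCompactOperator (⇑(CFC.sqrt (star B * B) * A * (star A * CFC.sqrt (star B * B)) - 1)) ∧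
    IsCompactOperator (⇑(star A * (star B * B) * A - 1)) := by
  have hleft : ∀ (S : H →L[ℂ] H) {K : H →L[ℂ] H},
      IsCompactOperator (⇑K) → IsCompactOperator (⇑(S * K)) := fun S _ hK => hK.clm_comp S
  have hright : ∀ {K : H →L[ℂ] H} (S : H →L[ℂ] H),
      IsCompactOperator (⇑K) → IsCompactOperator (⇑(K * S)) := fun S hK => hK.comp_clm S
  have hadd : ∀ {K L : H →L[ℂ] H}, IsCompactOperator (⇑K) → IsCompactOperator (⇑L) →
      IsCompactOperator (⇑(K + L)) := fun hK hL => hK.add hL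
  have hsub : ∀ {K L : H →L[ℂ] H}, IsCompactOperator (⇑K) → IsCompactOperator (⇑L) →
      IsCompactOperator (⇑(K - L)) := fun hK hL => hK.sub hL
  have hAB' : IsCompactOperator (⇑(star B * star A - 1)) := by
    simpa using hAB.star_clm
  have hBA' : IsCompactOperator (⇑(star A * star B - 1)) := by
    simpa using hBA.star_clm
  refine ⟨?_, ?_⟩
  · have hP : CFC.sqrt (star B * B) * CFC.sqrt (star B * B) = star B * B :=
      CFC.sqrt_mul_sqrt_self _ (star_mul_self_nonneg B)
    generalize CFC.sqrt (star B * B) = P at hP ⊢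
    have hPPQ : IsCompactOperator (⇑(P * P * (A * star A) - 1)) := by
      have h : P * P * (A * star A) - 1
          = star B * ((B * A - 1) * star A) + (star B * star A - 1) := by
        rw [hP]; noncomm_ring
      rw [h]
      exact hadd (hleft _ (hright _ hBA)) hAB'
    have hQPP : IsCompactOperator (⇑(A * star A * (P * P) - 1)) := by
      have h : A * star A * (P * P) - 1
          = A * ((star A * star B - 1) * B) + (A * B - 1) := by
        rw [hP]; noncomm_ring
      rw [h]
      exact hadd (hleft _ (hright _ hBA')) hAB
    -- The bracket is `PQ - QP`, written through `QP · P · PQ`.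
    have h : P * A * (star A * P) - 1
        = (A * star A * P * (P * P * (A * star A) - 1)
            - (A * star A * (P * P) - 1) * (P * (A * star A))) * P
          + (A * star A * (P * P) - 1) := by
      noncomm_ring
    rw [h]
    exact hadd (hright _ (hsub (hleft _ hPPQ) (hright _ hQPP))) hQPP
  · have h : star A * (star B * B) * A - 1
        = star A * star B * (B * A - 1) + (star A * star B - 1) := by
      noncomm_ring
    rw [h]
    exact hadd (hleft _ hBA) hBA'
end

section
/- Let H be a complex Hilbert space and (T_n) a sequence of self-adjoint bounded operators on H converging in the strong operator topology to a bounded operator T (i.e. T_n ξ → T ξ for all ξ). Then T is self-adjoint, and for every continuous function f : ℝ → ℝ, the operators f(T_n) (continuous functional calculus) converge to f(T) in the strong operator topology. (This underlies the assertion of Appendix 1 that continuous-functional-calculus maps such as A ↦ (A*A)^t are continuous on compact subsets for the compact-open topology.) -/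
/-!
Strong limits of self-adjoint operators are self-adjoint because symmetry `⟪T x, y⟫ = ⟪x, T y⟫`
passes to pointwise limits. By the uniform boundedness principle, `‖T n‖ ≤ C` for some `C`, which may
be enlarged so that also `‖T₀‖ ≤ C`; hence all the spectra lie in `[-C, C]`. Multiplication is jointly
sequentially continuous for the strong topology on bounded sets, so `p (T n) → p (T₀)` strongly
for every polynomial `p` (`tendsto_aeval_apply`). By Weierstrass, `f` is uniformly approximated by
polynomials on `[-C, C]`, and the functional calculus is norm-contractive
(`norm_cfc_sub_aeval_le`), so the convergence passes from polynomials to `f` by an `ε/3` argument.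
-/

open Filter

set_option synthInstance.maxHeartbeats 1000000
set_option maxHeartbeats 1000000

/-- Strong convergence of a norm-bounded sequence is preserved under polynomials. -/
theorem tendsto_aeval_apply {H : Type*} [NormedAddCommGroup H] [InnerProductSpace ℂ H]
    {T : ℕ → H →L[ℂ] H} {T₀ : H →L[ℂ] H} {C : ℝ} (hC : ∀ n, ‖T n‖ ≤ C)
    (hSOT : ∀ ξ : H, Tendsto (fun n => T n ξ) atTop (nhds (T₀ ξ)))
    (p : Polynomial ℝ) (ξ : H) :
    Tendsto (fun n => Polynomial.aeval (T n) p ξ) atTop (nhds (Polynomial.aeval T₀ p ξ)) := by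
  have hpow : ∀ (k : ℕ) (ξ : H), Tendsto (fun n => (T n ^ k) ξ) atTop (nhds ((T₀ ^ k) ξ)) := by
    intro k
    induction k with
    | zero => intro ξ; simp
    | succ k ih =>
      intro ξ
      simp only [pow_succ', mul_apply_eq_comp]
      -- `T n (T n ^ k ξ) = T n (T n ^ k ξ - T₀ ^ k ξ) + T n (T₀ ^ k ξ)`, where the first term is
      -- at most `C * ‖T n ^ k ξ - T₀ ^ k ξ‖`.
      have h1 : Tendsto (fun n => T n ((T n ^ k) ξ - (T₀ ^ k) ξ)) atTop (nhds 0) := by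
        have h2 : Tendsto (fun n => C * ‖(T n ^ k) ξ - (T₀ ^ k) ξ‖) atTop (nhds 0) := by
          simpa using (tendsto_iff_norm_sub_tendsto_zero.1 (ih ξ)).const_mul C
        exact squeeze_zero_norm (fun n => (T n).le_of_opNorm_le (hC n) _) h2
      simpa using h1.add (hSOT ((T₀ ^ k) ξ))
  induction p using Polynomial.induction_on' with
  | add p q hp hq => simpa using hp.add hq
  | monomial k a =>
    simpa [Polynomial.aeval_monomial, Algebra.algebraMap_eq_smul_one] using
      (hpow k ξ).const_smul a

/-- The spectrum of a self-adjoint `A` with `‖A‖ ≤ C` lies in `[-C, C]`, so a polynomial uniformly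
close to `f` on that interval gives an operator close to `f(A)` in norm. -/
theorem norm_cfc_sub_aeval_le {H : Type*} [NormedAddCommGroup H] [InnerProductSpace ℂ H]
    [CompleteSpace H] {A : H →L[ℂ] H} (hA : IsSelfAdjoint A) {C δ : ℝ} (hAC : ‖A‖ ≤ C)
    (hδ : 0 ≤ δ) {f : ℝ → ℝ} (hf : Continuous f) {p : Polynomial ℝ}
    (hp : ∀ x ∈ Set.Icc (-C) C, |p.eval x - f x| < δ) :
    ‖cfc f A - Polynomial.aeval A p‖ ≤ δ := by
  rw [← cfc_polynomial p A hA, ← cfc_sub f p.eval A hf.continuousOn p.continuous.continuousOn]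
  refine norm_cfc_le hδ fun x hx => ?_
  have hxA : ‖x‖ ≤ ‖A‖ := by
    simpa [cfc_id' ℝ A hA] using
      norm_apply_le_norm_cfc (fun y : ℝ => y) A hx continuousOn_id hA
  rw [Real.norm_eq_abs, abs_sub_comm]
  exact (hp x (abs_le.1 (hxA.trans hAC))).le

/-- Appendix 1: the continuous functional calculus is sequentially continuous for the
strong operator topology on self-adjoint operators: if self-adjoint `T n` converge
pointwise to `T`, then `T` is self-adjoint and `f (T n) → f T` pointwise for every
continuous `f : ℝ → ℝ`. -/
theorem stmt_18 {H : Type*} [NormedAddCommGroup H] [InnerProductSpace ℂ H] [CompleteSpace H]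
    (T : ℕ → H →L[ℂ] H) (T₀ : H →L[ℂ] H)
    (hsa : ∀ n, IsSelfAdjoint (T n))
    (hSOT : ∀ ξ : H, Tendsto (fun n => T n ξ) atTop (nhds (T₀ ξ))) :
    IsSelfAdjoint T₀ ∧
    ∀ f : ℝ → ℝ, Continuous f →
      ∀ ξ : H, Tendsto (fun n => cfc f (T n) ξ) atTop (nhds (cfc f T₀ ξ)) := by
  have hsa₀ : IsSelfAdjoint T₀ := by
    rw [ContinuousLinearMap.isSelfAdjoint_iff_isSymmetric]
    intro x y
    have h1 : Tendsto (fun n => inner ℂ (T n x) y) atTop (nhds (inner ℂ (T₀ x) y)) :=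
      (hSOT x).inner tendsto_const_nhds
    have h2 : Tendsto (fun n => inner ℂ x (T n y)) atTop (nhds (inner ℂ x (T₀ y))) :=
      tendsto_const_nhds.inner (hSOT y)
    refine tendsto_nhds_unique h1 (h2.congr fun n => ?_)
    exact ((hsa n).isSymmetric x y).symm
  refine ⟨hsa₀, fun f hf ξ => ?_⟩
  obtain ⟨C', hC'⟩ : ∃ C', ∀ n, ‖T n‖ ≤ C' := by
    refine banach_steinhaus fun x => ?_
    obtain ⟨c, hc⟩ := (hSOT x).norm.bddAbove_range
    exact ⟨c, fun n => hc ⟨n, rfl⟩⟩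
  obtain ⟨C, hC, hC₀⟩ : ∃ C, (∀ n, ‖T n‖ ≤ C) ∧ ‖T₀‖ ≤ C :=
    ⟨max C' ‖T₀‖, fun n => (hC' n).trans (le_max_left _ _), le_max_right _ _⟩
  rw [Metric.tendsto_atTop]
  intro ε hε
  -- The factor `‖ξ‖ + 1` makes each approximation error `δ * ‖ξ‖` at most `ε / 3`, also for `ξ = 0`.
  obtain ⟨δ, hδ, hδε⟩ : ∃ δ > 0, δ * ‖ξ‖ ≤ ε / 3 := by
    refine ⟨ε / 3 / (‖ξ‖ + 1), by positivity, ?_⟩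
    rw [div_mul_eq_mul_div, div_le_iff₀ (by positivity)]
    nlinarith [norm_nonneg ξ]
  obtain ⟨p, hp⟩ := exists_polynomial_near_of_continuousOn (-C) C f hf.continuousOn δ hδ
  have happrox : ∀ A : H →L[ℂ] H, IsSelfAdjoint A → ‖A‖ ≤ C →
      dist (cfc f A ξ) (Polynomial.aeval A p ξ) ≤ ε / 3 := by
    intro A hA hAC
    rw [dist_eq_norm, ← sub_apply]
    exact (ContinuousLinearMap.le_of_opNorm_le _
      (norm_cfc_sub_aeval_le hA hAC hδ.le hf hp) ξ).trans hδε
  obtain ⟨N, hN⟩ := Metric.tendsto_atTop.1 (tendsto_aeval_apply hC hSOT p ξ) (ε / 3) (by positivity)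
  refine ⟨N, fun n hn => ?_⟩
  have h1 := happrox (T n) (hsa n) (hC n)
  have h2 := hN n hn
  have h3 := happrox T₀ hsa₀ hC₀
  rw [dist_comm] at h3
  have h4 := dist_triangle4 (cfc f (T n) ξ) (Polynomial.aeval (T n) p ξ)
    (Polynomial.aeval T₀ p ξ) (cfc f T₀ ξ)
  linarith
end
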